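/- Let T > 0, c₁ > c₀ > 0 and M₀ ∈ ℕ. For each ε ∈ (0,1] let c_ε ∈ C^∞([0,1]) be real with c₀ ≤ c_ε(x) ≤ c₁, and b_ε ∈ C^∞([0,1]×[0,T]) real such that ‖b_ε‖_{L^∞(X_T)} ≤ log(r_ε) for small ε, where (r_ε) is a slow scale net with r_ε ≥ 1; assume that for every k the net (‖∂_x^k c_ε‖_{L^∞}) is of slow scale and for all l,k the net (‖∂_t^l ∂_x^k b_ε‖_{L^∞(X_T)}) is of slow scale. Let f_{1,ε}, f_{2,ε} ∈ C_c^∞((0,1)) and g_ε ∈ C^∞([0,1]×[0,T]) be families such that for ALL k,l: ‖∂_x^k f_{1,ε}‖²_{L²((0,1))} + ‖∂_x^k f_{2,ε}‖²_{L²((0,1))} + ‖∂_t^l ∂_x^k g_ε‖²_{L²(X_T)} = O(ε^{-M₀}) as ε → 0 (with M₀ independent of k,l). Then the unique smooth solutions u_ε of ∂_t²u_ε + ∂_x²(c_ε ∂_x²u_ε) + b_ε ∂_x²u_ε = g_ε with u_ε(·,0) = f_{1,ε}, ∂_t u_ε(·,0) = f_{2,ε} and clamped boundary conditions satisfy the uniform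 moderateness estimate: for all l,k ∈ ℕ, ‖∂_t^l ∂_x^k u_ε‖_{L²(X_T)} = O(ε^{-M₀-1}) as ε → 0. -/

import Mathlib

open MeasureTheory Filter Topology Asymptotics

noncomputable section

/-- A test function on `(0,1)`: smooth, compactly supported, with support inside `(0,1)`. -/
def IsTestFun (φ : ℝ → ℂ) : Prop :=
  ContDiff ℝ (⊤ : ℕ∞) φ ∧ HasCompactSupport φ ∧ tsupport φ ⊆ Set.Ioo 0 1

/-- Partial derivative with respect to the first (space) variable. -/
def Dx (v : ℝ → ℝ → ℂ) : ℝ → ℝ → ℂ := fun x t => deriv (fun y => v y t) x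

/-- Partial derivative with respect to the second (time) variable. -/
def Dt (v : ℝ → ℝ → ℂ) : ℝ → ℝ → ℂ := fun x t => deriv (fun s => v x s) t

/-- Iterated partial derivative `∂ₓᵏ ∂ₜˡ v`, for `v = v x t` a function of the space
variable `x` (first) and the time variable `t` (second). -/
def PD {F : Type*} [NormedAddCommGroup F] [NormedSpace ℝ F] (k l : ℕ)
    (v : ℝ → ℝ → F) : ℝ → ℝ → F :=
  fun x t => iteratedDeriv k (fun y => iteratedDeriv l (fun s => v y s) t) x

/-- `u` (smooth, as a function on `ℝ²`; its restriction to `[0,1]×[0,T]` is what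
matters) is a classical solution of the Euler–Bernoulli initial-boundary value
problem `∂ₜ²u + ∂ₓ²(c ∂ₓ²u) + b ∂ₓ²u = g` on `[0,1]×[0,T]`, `u(·,0) = f₁`,
`∂ₜu(·,0) = f₂`, with clamped boundary conditions
`u(0,t) = u(1,t) = ∂ₓu(0,t) = ∂ₓu(1,t) = 0`. -/
def IsClassicalSol (T : ℝ) (c : ℝ → ℝ) (b : ℝ → ℝ → ℝ) (f₁ f₂ : ℝ → ℂ)
    (g : ℝ → ℝ → ℂ) (u : ℝ → ℝ → ℂ) : Prop :=
  ContDiff ℝ (⊤ : ℕ∞) (Function.uncurry u) ∧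
  (∀ x ∈ Set.Icc (0:ℝ) 1, ∀ t ∈ Set.Icc (0:ℝ) T,
    Dt (Dt u) x t + Dx (Dx (fun y s => (c y : ℂ) * Dx (Dx u) y s)) x t
      + (b x t : ℂ) * Dx (Dx u) x t = g x t) ∧
  (∀ x ∈ Set.Icc (0:ℝ) 1, u x 0 = f₁ x ∧ Dt u x 0 = f₂ x) ∧
  (∀ t ∈ Set.Icc (0:ℝ) T, u 0 t = 0 ∧ u 1 t = 0 ∧ Dx u 0 t = 0 ∧ Dx u 1 t = 0)

/-- A net `(r_ε)_{ε ∈ (0,1]}` of (nonnegative real) numbers is of slow scale if for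
every `p ∈ ℕ` one has `|r_ε|^p = O(ε⁻¹)` as `ε → 0`. -/
def SlowScaleNet (r : ℝ → ℝ) : Prop :=
  ∀ p : ℕ, (fun ε => |r ε| ^ p) =O[𝓝[>] (0:ℝ)] fun ε => ε⁻¹

/-! ### Calculus of partial derivatives -/

namespace Beam

abbrev Sm {F : Type*} [NormedAddCommGroup F] [NormedSpace ℝ F] (v : ℝ → ℝ → F) : Prop :=
  ContDiff ℝ (⊤ : ℕ∞) (Function.uncurry v)

def dx {F : Type*} [NormedAddCommGroup F] [NormedSpace ℝ F] (v : ℝ → ℝ → F) : ℝ → ℝ → F :=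
  fun x t => deriv (fun y => v y t) x

def dt {F : Type*} [NormedAddCommGroup F] [NormedSpace ℝ F] (v : ℝ → ℝ → F) : ℝ → ℝ → F :=
  fun x t => deriv (fun s => v x s) t

section pdcalc
variable {F : Type*} [NormedAddCommGroup F] [NormedSpace ℝ F]

theorem dx_eq {v : ℝ → ℝ → F} (hv : Sm v) (x t : ℝ) :
    HasDerivAt (fun y => v y t) (fderiv ℝ (Function.uncurry v) (x, t) (1, 0)) x := by
  have h1 : HasFDerivAt (Function.uncurry v) (fderiv ℝ (Function.uncurry v) (x, t)) (x, t) :=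
    (hv.differentiable (by simp) _).hasFDerivAt
  have h2 : HasDerivAt (fun y : ℝ => (y, t)) ((1 : ℝ), (0 : ℝ)) x :=
    (hasDerivAt_id x).prodMk (hasDerivAt_const x t)
  exact h1.comp_hasDerivAt x h2

theorem dt_eq {v : ℝ → ℝ → F} (hv : Sm v) (x t : ℝ) :
    HasDerivAt (fun s => v x s) (fderiv ℝ (Function.uncurry v) (x, t) (0, 1)) t := by
  have h1 : HasFDerivAt (Function.uncurry v) (fderiv ℝ (Function.uncurry v) (x, t)) (x, t) :=
    (hv.differentiable (by simp) _).hasFDerivAt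
  have h2 : HasDerivAt (fun s : ℝ => (x, s)) ((0 : ℝ), (1 : ℝ)) t :=
    (hasDerivAt_const t x).prodMk (hasDerivAt_id t)
  exact h1.comp_hasDerivAt t h2

theorem Sm.hdx {v : ℝ → ℝ → F} (hv : Sm v) (x t : ℝ) :
    HasDerivAt (fun y => v y t) (dx v x t) x :=
  (dx_eq hv x t).differentiableAt.hasDerivAt

theorem Sm.hdt {v : ℝ → ℝ → F} (hv : Sm v) (x t : ℝ) :
    HasDerivAt (fun s => v x s) (dt v x t) t :=
  (dt_eq hv x t).differentiableAt.hasDerivAt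

theorem dx_fun {v : ℝ → ℝ → F} (hv : Sm v) :
    Function.uncurry (dx v) = fun p => fderiv ℝ (Function.uncurry v) p (1, 0) := by
  funext ⟨x, t⟩
  exact (dx_eq hv x t).deriv

theorem dt_fun {v : ℝ → ℝ → F} (hv : Sm v) :
    Function.uncurry (dt v) = fun p => fderiv ℝ (Function.uncurry v) p (0, 1) := by
  funext ⟨x, t⟩
  exact (dt_eq hv x t).deriv

theorem Sm.fd {v : ℝ → ℝ → F} (hv : Sm v) :
    ContDiff ℝ (⊤ : ℕ∞) (fderiv ℝ (Function.uncurry v)) :=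
  ContDiff.fderiv_right hv (m := ((⊤ : ℕ∞) : WithTop ℕ∞)) (by simp)

theorem Sm.dx {v : ℝ → ℝ → F} (hv : Sm v) : Sm (dx v) := by
  unfold Sm
  rw [dx_fun hv]
  exact hv.fd.clm_apply contDiff_const

theorem Sm.dt {v : ℝ → ℝ → F} (hv : Sm v) : Sm (dt v) := by
  unfold Sm
  rw [dt_fun hv]
  exact hv.fd.clm_apply contDiff_const

theorem dt_dx {v : ℝ → ℝ → F} (hv : Sm v) : Beam.dt (Beam.dx v) = Beam.dx (Beam.dt v) := by
  funext x t
  have hd : HasFDerivAt (fderiv ℝ (Function.uncurry v))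
    (fderiv ℝ (fderiv ℝ (Function.uncurry v)) (x, t)) (x, t) :=
    (hv.fd.differentiable (by simp) _).hasFDerivAt
  have h1 : Beam.dt (Beam.dx v) x t
      = fderiv ℝ (fderiv ℝ (Function.uncurry v)) (x, t) (0, 1) (1, 0) := by
    refine ((dt_eq hv.dx x t).deriv).trans ?_
    rw [dx_fun hv, (hd.clm_apply (hasFDerivAt_const _ _)).fderiv]
    simp
  have h2 : Beam.dx (Beam.dt v) x t
      = fderiv ℝ (fderiv ℝ (Function.uncurry v)) (x, t) (1, 0) (0, 1) := by
    refine ((dx_eq hv.dt x t).deriv).trans ?_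
    rw [dt_fun hv, (hd.clm_apply (hasFDerivAt_const _ _)).fderiv]
    simp
  rw [h1, h2]
  have hs : IsSymmSndFDerivAt ℝ (Function.uncurry v) (x, t) :=
    ContDiffAt.isSymmSndFDerivAt (n := ((⊤ : ℕ∞) : WithTop ℕ∞)) hv.contDiffAt (by
      rw [minSmoothness_of_isRCLikeNormedField]; exact WithTop.coe_le_coe.2 le_top)
  exact hs _ _

theorem Sm.cont {v : ℝ → ℝ → F} (hv : Sm v) : Continuous (Function.uncurry v) := hv.continuous

theorem Sm.contx {v : ℝ → ℝ → F} (hv : Sm v) (t : ℝ) : Continuous (fun x => v x t) :=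
  hv.cont.comp (continuous_id.prodMk continuous_const)

theorem Sm.contt {v : ℝ → ℝ → F} (hv : Sm v) (x : ℝ) : Continuous (fun t => v x t) :=
  hv.cont.comp (continuous_const.prodMk continuous_id)

/-- iterated partial derivative -/
def D (k l : ℕ) (v : ℝ → ℝ → F) : ℝ → ℝ → F := Beam.dx^[k] (Beam.dt^[l] v)

theorem Sm.dxn {v : ℝ → ℝ → F} (hv : Sm v) (k : ℕ) : Sm (Beam.dx^[k] v) := by
  induction k with
  | zero => exact hv
  | succ k ih => rw [Function.iterate_succ_apply']; exact ih.dx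

theorem Sm.dtn {v : ℝ → ℝ → F} (hv : Sm v) (k : ℕ) : Sm (Beam.dt^[k] v) := by
  induction k with
  | zero => exact hv
  | succ k ih => rw [Function.iterate_succ_apply']; exact ih.dt

theorem Sm.D {v : ℝ → ℝ → F} (hv : Sm v) (k l : ℕ) : Sm (D k l v) := (hv.dtn l).dxn k

theorem dt_dxn {v : ℝ → ℝ → F} (hv : Sm v) (k : ℕ) :
    Beam.dt (Beam.dx^[k] v) = Beam.dx^[k] (Beam.dt v) := by
  induction k with
  | zero => rfl
  | succ k ih => rw [Function.iterate_succ_apply', Function.iterate_succ_apply',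
      dt_dx (hv.dxn k), ih]

theorem dtn_dx {v : ℝ → ℝ → F} (hv : Sm v) (l : ℕ) :
    Beam.dt^[l] (Beam.dx v) = Beam.dx (Beam.dt^[l] v) := by
  induction l with
  | zero => rfl
  | succ k ih => rw [Function.iterate_succ_apply', Function.iterate_succ_apply',
      ih, dt_dx (hv.dtn k)]

theorem D_zero (v : ℝ → ℝ → F) : D 0 0 v = v := rfl

theorem D_dt (v : ℝ → ℝ → F) (k l : ℕ) : D k l (Beam.dt v) = D k (l+1) v := rfl

theorem D_dx {v : ℝ → ℝ → F} (hv : Sm v) (k l : ℕ) : D k l (Beam.dx v) = D (k+1) l v := by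
  unfold D
  rw [dtn_dx hv, Function.iterate_succ_apply]

theorem dt_D {v : ℝ → ℝ → F} (hv : Sm v) (k l : ℕ) : Beam.dt (D k l v) = D k (l+1) v := by
  unfold D
  rw [dt_dxn (hv.dtn l), Function.iterate_succ_apply']

theorem dx_D (v : ℝ → ℝ → F) (k l : ℕ) : Beam.dx (D k l v) = D (k+1) l v := by
  unfold D
  rw [Function.iterate_succ_apply']

theorem D_D {v : ℝ → ℝ → F} (hv : Sm v) (k l k' l' : ℕ) :
    D k l (D k' l' v) = D (k+k') (l+l') v := by
  induction k with
  | succ k ih => rw [← dx_D, ih, dx_D]; congr 1; omega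
  | zero =>
    induction l with
    | zero => simp [D_zero]
    | succ l ih => rw [← dt_D (hv.D _ _), ih, dt_D hv]; congr 1; omega

/-- pointwise scalar product -/
def ml (f : ℝ → ℝ → ℝ) (a : ℝ → ℝ → F) : ℝ → ℝ → F := fun x t => f x t • a x t

theorem Sm.ml {f : ℝ → ℝ → ℝ} {a : ℝ → ℝ → F} (hf : Sm f) (ha : Sm a) : Sm (ml f a) :=
  ContDiff.smul hf ha

theorem Sm.add {a b : ℝ → ℝ → F} (ha : Sm a) (hb : Sm b) : Sm (a + b) := ContDiff.add ha hb
theorem Sm.sub {a b : ℝ → ℝ → F} (ha : Sm a) (hb : Sm b) : Sm (a - b) := ContDiff.sub ha hb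

theorem dx_ml {f : ℝ → ℝ → ℝ} {a : ℝ → ℝ → F} (hf : Sm f) (ha : Sm a) :
    Beam.dx (ml f a) = ml (Beam.dx f) a + ml f (Beam.dx a) := by
  funext x t
  have := ((hf.hdx x t).smul (ha.hdx x t)).deriv
  rw [add_comm]
  exact this

theorem dt_ml {f : ℝ → ℝ → ℝ} {a : ℝ → ℝ → F} (hf : Sm f) (ha : Sm a) :
    Beam.dt (ml f a) = ml (Beam.dt f) a + ml f (Beam.dt a) := by
  funext x t
  have := ((hf.hdt x t).smul (ha.hdt x t)).deriv
  rw [add_comm]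
  exact this

theorem dx_add {a b : ℝ → ℝ → F} (ha : Sm a) (hb : Sm b) :
    Beam.dx (a + b) = Beam.dx a + Beam.dx b := by
  funext x t; exact ((ha.hdx x t).add (hb.hdx x t)).deriv

theorem dt_add {a b : ℝ → ℝ → F} (ha : Sm a) (hb : Sm b) :
    Beam.dt (a + b) = Beam.dt a + Beam.dt b := by
  funext x t; exact ((ha.hdt x t).add (hb.hdt x t)).deriv

theorem dx_sub {a b : ℝ → ℝ → F} (ha : Sm a) (hb : Sm b) :
    Beam.dx (a - b) = Beam.dx a - Beam.dx b := by
  funext x t; exact ((ha.hdx x t).sub (hb.hdx x t)).deriv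

theorem dt_sub {a b : ℝ → ℝ → F} (ha : Sm a) (hb : Sm b) :
    Beam.dt (a - b) = Beam.dt a - Beam.dt b := by
  funext x t; exact ((ha.hdt x t).sub (hb.hdt x t)).deriv

theorem D_add {a b : ℝ → ℝ → F} (ha : Sm a) (hb : Sm b) (k l : ℕ) :
    D k l (a + b) = D k l a + D k l b := by
  induction k with
  | succ k ih => rw [← dx_D, ih, dx_add (ha.D _ _) (hb.D _ _), dx_D, dx_D]
  | zero =>
    induction l with
    | zero => rfl
    | succ l ih => rw [← dt_D (ha.add hb), ih, dt_add (ha.D _ _) (hb.D _ _), dt_D ha, dt_D hb]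

theorem D_sub {a b : ℝ → ℝ → F} (ha : Sm a) (hb : Sm b) (k l : ℕ) :
    D k l (a - b) = D k l a - D k l b := by
  induction k with
  | succ k ih => rw [← dx_D, ih, dx_sub (ha.D _ _) (hb.D _ _), dx_D, dx_D]
  | zero =>
    induction l with
    | zero => rfl
    | succ l ih => rw [← dt_D (ha.sub hb), ih, dt_sub (ha.D _ _) (hb.D _ _), dt_D ha, dt_D hb]

theorem PD_eq (v : ℝ → ℝ → F) (k l : ℕ) : PD k l v = D k l v := by
  have h1 : ∀ (l : ℕ) (w : ℝ → ℝ → F) (x t : ℝ),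
      Beam.dt^[l] w x t = iteratedDeriv l (fun s => w x s) t := by
    intro l
    induction l with
    | zero => intro w x t; simp
    | succ l ih => intro w x t; rw [Function.iterate_succ_apply, ih, iteratedDeriv_succ']; rfl
  have h2 : ∀ (l : ℕ) (w : ℝ → ℝ → F) (x t : ℝ),
      Beam.dx^[l] w x t = iteratedDeriv l (fun s => w s t) x := by
    intro l
    induction l with
    | zero => intro w x t; simp
    | succ l ih => intro w x t; rw [Function.iterate_succ_apply, ih, iteratedDeriv_succ']; rfl
  funext x t
  unfold PD D
  rw [h2]
  congr 1
  funext y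
  rw [h1]

theorem D_x (c : ℝ → F) (k : ℕ) (x t : ℝ) :
    D k 0 (fun y _ => c y) x t = iteratedDeriv k c x := by
  rw [← PD_eq]; simp [PD]

theorem deriv_congr_Icc {f g : ℝ → F} {a b : ℝ} (hab : a < b) (hf : Differentiable ℝ f)
    (hg : Differentiable ℝ g) (h : ∀ x ∈ Set.Icc a b, f x = g x) :
    ∀ x ∈ Set.Icc a b, deriv f x = deriv g x := by
  intro x hx
  have hu := (uniqueDiffOn_Icc hab) x hx
  rw [← (hf x).derivWithin hu, ← (hg x).derivWithin hu]
  exact derivWithin_congr h (h x hx)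

theorem D_congr {p q : ℝ → ℝ → F} {T : ℝ} (hT : 0 < T) (hp : Sm p) (hq : Sm q)
    (h : ∀ x ∈ Set.Icc (0:ℝ) 1, ∀ t ∈ Set.Icc (0:ℝ) T, p x t = q x t) (k l : ℕ) :
    ∀ x ∈ Set.Icc (0:ℝ) 1, ∀ t ∈ Set.Icc (0:ℝ) T, D k l p x t = D k l q x t := by
  induction k with
  | succ k ih =>
    intro x hx t ht
    rw [← dx_D, ← dx_D]
    exact deriv_congr_Icc one_pos (fun y => ((hp.D k l).hdx y t).differentiableAt)
      (fun y => ((hq.D k l).hdx y t).differentiableAt) (fun y hy => ih y hy t ht) x hx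
  | zero =>
    induction l with
    | zero => exact h
    | succ l ih =>
      intro x hx t ht
      rw [← dt_D hp, ← dt_D hq]
      exact deriv_congr_Icc hT (fun y => ((hp.D 0 l).hdt x y).differentiableAt)
        (fun y => ((hq.D 0 l).hdt x y).differentiableAt) (fun y hy => ih x hx y hy) t ht

end pdcalc
end Beam
/-! ### One-dimensional inequalities and the energy estimate -/

namespace Beam

theorem hasDerivAt_int {e : ℝ → ℝ → ℝ} (he : Sm e) (t : ℝ) :
    HasDerivAt (fun s => ∫ x in (0:ℝ)..1, e x s) (∫ x in (0:ℝ)..1, dt e x t) t := by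
  have hcomp : IsCompact (Set.Icc (0:ℝ) 1 ×ˢ Set.Icc (t-1) (t+1)) := isCompact_Icc.prod isCompact_Icc
  obtain ⟨C, hC⟩ := hcomp.exists_bound_of_continuousOn he.dt.cont.continuousOn
  refine (intervalIntegral.hasDerivAt_integral_of_dominated_loc_of_deriv_le
    (F := fun s x => e x s) (F' := fun s x => dt e x s) (bound := fun _ => C)
    (s := Set.Icc (t-1) (t+1)) (Icc_mem_nhds (by linarith) (by linarith)) ?_ ?_ ?_ ?_ ?_ ?_).2
  · exact Filter.Eventually.of_forall fun s => (he.contx s).aestronglyMeasurable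
  · exact (he.contx t).intervalIntegrable _ _
  · exact (he.dt.contx t).aestronglyMeasurable
  · refine Filter.Eventually.of_forall fun x hx s hs => ?_
    rw [Set.uIoc_of_le zero_le_one] at hx
    exact hC (x, s) ⟨⟨hx.1.le, hx.2⟩, hs⟩
  · exact intervalIntegrable_const
  · exact Filter.Eventually.of_forall fun x _ s _ => he.hdt x s

theorem cont_int {e : ℝ → ℝ → ℝ} (he : Sm e) :
    Continuous (fun s => ∫ x in (0:ℝ)..1, e x s) :=
  continuous_iff_continuousAt.2 fun t => (hasDerivAt_int he t).continuousAt

theorem norm_sub_le_int {F : Type*} [NormedAddCommGroup F] [NormedSpace ℝ F] [CompleteSpace F]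
    {φ φ' : ℝ → F} (hφ : ∀ y, HasDerivAt φ (φ' y) y)
    (hc : Continuous φ') {a b x y : ℝ} (hx : x ∈ Set.Icc a b) (hy : y ∈ Set.Icc a b) :
    ‖φ x - φ y‖ ≤ ∫ z in a..b, ‖φ' z‖ := by
  have hab : a ≤ b := hx.1.trans hx.2
  rw [← intervalIntegral.integral_eq_sub_of_hasDerivAt (fun z _ => hφ z)
    (hc.intervalIntegrable _ _)]
  refine (intervalIntegral.norm_integral_le_abs_integral_norm).trans ?_
  refine le_trans ?_ (le_of_eq (abs_of_nonneg
    (intervalIntegral.integral_nonneg hab fun z _ => norm_nonneg _)))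
  refine intervalIntegral.abs_integral_mono_interval ?_ ?_ (hc.norm.intervalIntegrable _ _)
  · rw [Set.uIoc_of_le hab]
    exact Set.Ioc_subset_Ioc (le_min hy.1 hx.1) (max_le hy.2 hx.2)
  · exact Filter.Eventually.of_forall fun z => norm_nonneg _

theorem sob1 {q q' p : ℝ → ℝ} (hq : ∀ y, HasDerivAt q (q' y) y) (hc : Continuous q')
    (hp : Continuous p) (hqp : ∀ y, |q' y| ≤ p y) {a b x : ℝ} (hx : x ∈ Set.Icc a b) :
    (b - a) * q x ≤ (∫ y in a..b, q y) + (b - a) * ∫ y in a..b, p y := by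
  have hab : a ≤ b := hx.1.trans hx.2
  have hqc : Continuous q := continuous_iff_continuousAt.2 fun t => (hq t).continuousAt
  have key : ∀ y ∈ Set.Icc a b, q x - ∫ z in a..b, p z ≤ q y := by
    intro y hy
    have h1 : |q x - q y| ≤ ∫ z in a..b, p z := by
      exact (norm_sub_le_int hq hc hx hy).trans (intervalIntegral.integral_mono hab
        (hc.norm.intervalIntegrable _ _) (hp.intervalIntegrable _ _) hqp)
    linarith [le_abs_self (q x - q y)]
  have h2 := intervalIntegral.integral_mono_on (μ := volume) hab (intervalIntegrable_const)
    (hqc.intervalIntegrable _ _) key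
  rw [intervalIntegral.integral_const] at h2
  simp only [smul_eq_mul] at h2
  linarith

theorem l1_le_l2 {φ : ℝ → ℂ} (hφ : Continuous φ) {K : ℝ} (hK : 0 ≤ K)
    (h : ∫ x in (0:ℝ)..1, ‖φ x‖ ^ 2 ≤ K ^ 2) : ∫ x in (0:ℝ)..1, ‖φ x‖ ≤ K := by
  set m := ∫ x in (0:ℝ)..1, ‖φ x‖ with hm
  have h0 : 0 ≤ ∫ x in (0:ℝ)..1, (‖φ x‖ ^ 2 - 2 * m * ‖φ x‖ + m ^ 2) :=
    intervalIntegral.integral_nonneg zero_le_one fun x _ => by nlinarith [sq_nonneg (‖φ x‖ - m)]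
  have hn := hφ.norm
  rw [intervalIntegral.integral_add, intervalIntegral.integral_sub,
    intervalIntegral.integral_const_mul, intervalIntegral.integral_const, ← hm] at h0
  · simp only [smul_eq_mul] at h0
    exact abs_le_of_sq_le_sq' (by nlinarith) hK |>.2
  all_goals exact Continuous.intervalIntegrable (by fun_prop) _ _

theorem interp {w w' w'' : ℝ → ℂ} (h1 : ∀ y, HasDerivAt w (w' y) y)
    (h2 : ∀ y, HasDerivAt w' (w'' y) y) (hc : Continuous w'') {x : ℝ} (hx : x ∈ Set.Icc (0:ℝ) 1) :
    ‖w' x‖ ≤ 2 * (∫ y in (0:ℝ)..1, ‖w'' y‖) + 4 * ∫ y in (0:ℝ)..1, ‖w y‖ := by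
  set d := ∫ y in (0:ℝ)..1, ‖w'' y‖ with hd
  have hwc : Continuous w := continuous_iff_continuousAt.2 fun t => (h1 t).continuousAt
  have key : ∀ y ∈ Set.Icc (0:ℝ) (1/2), ‖w' x‖ - d ≤ 2 * ‖w (y + 1/2)‖ + 2 * ‖w y‖ := by
    intro y hy
    have := Convex.norm_image_sub_le_of_norm_hasDerivWithin_le (f := fun z => w z - z • w' x)
      (f' := fun z => w' z - (1:ℝ) • w' x) (s := Set.Icc (0:ℝ) 1) (x := y) (y := y + 1/2) (C := d)
      (fun z _ => ((h1 z).sub ((hasDerivAt_id z).smul_const (w' x))).hasDerivWithinAt)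
      (fun z hz => by rw [one_smul]; exact norm_sub_le_int h2 hc hz hx) (convex_Icc _ _)
      ⟨hy.1, by linarith [hy.2]⟩ ⟨by linarith [hy.1], by linarith [hy.2]⟩
    have e1 : y + 1/2 - y = (1/2 : ℝ) := by ring
    rw [e1] at this
    have e2 : w (y + 1/2) - (y + 1/2) • w' x - (w y - y • w' x)
        = w (y + 1/2) - w y - (1/2 : ℝ) • w' x := by
      rw [add_smul]; abel
    rw [e2] at this
    have e3 : ‖(1/2 : ℝ) • w' x‖ = 1/2 * ‖w' x‖ := by rw [norm_smul]; norm_num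
    have e4 : ‖(1/2 : ℝ) • w' x‖ ≤ ‖w (y + 1/2) - w y - (1/2 : ℝ) • w' x‖
        + ‖w (y+1/2)‖ + ‖w y‖ := by
      have : (1/2 : ℝ) • w' x = - (w (y + 1/2) - w y - (1/2 : ℝ) • w' x) + w (y+1/2) - w y := by
        abel
      calc ‖(1/2 : ℝ) • w' x‖ = ‖- (w (y + 1/2) - w y - (1/2 : ℝ) • w' x) + w (y+1/2) - w y‖ := by
            rw [← this]
        _ ≤ _ := (norm_sub_le _ _).trans (by
            gcongr; exact (norm_add_le _ _).trans (by rw [norm_neg]))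
    have e5 : ‖(1/2 : ℝ)‖ = 1/2 := by norm_num
    rw [e5] at this
    linarith
  have hI := intervalIntegral.integral_mono_on (μ := volume) (a := (0:ℝ)) (b := 1/2) (by norm_num)
    intervalIntegrable_const
    (Continuous.intervalIntegrable (by fun_prop) _ _) key
  rw [intervalIntegral.integral_const, intervalIntegral.integral_add,
    intervalIntegral.integral_const_mul, intervalIntegral.integral_const_mul,
    intervalIntegral.integral_comp_add_right (fun z => ‖w z‖)] at hI
  · have hadd := intervalIntegral.integral_add_adjacent_intervals
      (hwc.norm.intervalIntegrable (μ := volume) 0 (1/2)) (hwc.norm.intervalIntegrable (1/2) 1)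
    have hd0 : 0 ≤ d := intervalIntegral.integral_nonneg zero_le_one fun z _ => norm_nonneg _
    norm_num at hI hadd
    linarith
  all_goals exact Continuous.intervalIntegrable (by fun_prop) _ _

theorem sm_normsq {v : ℝ → ℝ → ℂ} (hv : Sm v) : Sm (fun x t => ‖v x t‖ ^ 2) :=
  ContDiff.norm_sq ℝ hv

theorem dt_normsq {v : ℝ → ℝ → ℂ} (hv : Sm v) (x t : ℝ) :
    HasDerivAt (fun s => ‖v x s‖ ^ 2) (2 * inner ℝ (v x t) (dt v x t)) t :=
  (hv.hdt x t).norm_sq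

theorem two_inner_le (a b : ℂ) : |2 * inner ℝ a b| ≤ ‖a‖ ^ 2 + ‖b‖ ^ 2 := by
  have h := abs_real_inner_le_norm a b
  rw [abs_mul, abs_two]
  nlinarith [sq_nonneg (‖a‖ - ‖b‖)]

theorem sob_x {v : ℝ → ℝ → ℂ} (hv : Sm v) {x : ℝ} (t : ℝ) (hx : x ∈ Set.Icc (0:ℝ) 1) :
    ‖v x t‖ ^ 2 ≤ 2 * (∫ y in (0:ℝ)..1, ‖v y t‖ ^ 2) + ∫ y in (0:ℝ)..1, ‖dx v y t‖ ^ 2 := by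
  have h1 := hv.contx t
  have h2 := hv.dx.contx t
  have := sob1 (q := fun y => ‖v y t‖ ^ 2) (q' := fun y => 2 * inner ℝ (v y t) (dx v y t))
    (p := fun y => ‖v y t‖ ^ 2 + ‖dx v y t‖ ^ 2) (fun y => (hv.hdx y t).norm_sq)
    (by fun_prop) (by fun_prop) (fun y => two_inner_le _ _) hx
  rw [intervalIntegral.integral_add] at this
  · linarith
  all_goals exact Continuous.intervalIntegrable (by fun_prop) _ _

theorem sob_t {v : ℝ → ℝ → ℂ} (hv : Sm v) {T t : ℝ} (ht : t ∈ Set.Icc (0:ℝ) T) :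
    T * (∫ x in (0:ℝ)..1, ‖v x t‖ ^ 2) ≤ (1 + T) * (∫ s in (0:ℝ)..T, ∫ x in (0:ℝ)..1, ‖v x s‖ ^ 2)
      + T * ∫ s in (0:ℝ)..T, ∫ x in (0:ℝ)..1, ‖dt v x s‖ ^ 2 := by
  have hs := sm_normsq hv
  have hs' := sm_normsq hv.dt
  have c1 := cont_int hs
  have c2 := cont_int hs'
  have := sob1 (q := fun s => ∫ x in (0:ℝ)..1, ‖v x s‖ ^ 2)
    (q' := fun s => ∫ x in (0:ℝ)..1, dt (fun x t => ‖v x t‖ ^ 2) x s)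
    (p := fun s => (∫ x in (0:ℝ)..1, ‖v x s‖ ^ 2) + ∫ x in (0:ℝ)..1, ‖dt v x s‖ ^ 2)
    (fun s => hasDerivAt_int hs s) (cont_int hs.dt) (by fun_prop) (fun s => by
      rw [← intervalIntegral.integral_add ((hs.contx s).intervalIntegrable _ _)
        ((hs'.contx s).intervalIntegrable _ _)]
      refine (intervalIntegral.abs_integral_le_integral_abs zero_le_one).trans ?_
      refine intervalIntegral.integral_mono zero_le_one ((hs.dt.contx s).abs.intervalIntegrable _ _)
        (((hs.contx s).add (hs'.contx s)).intervalIntegrable _ _) fun x => ?_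
      have : dt (fun x t => ‖v x t‖ ^ 2) x s = _ := (dt_normsq hv x s).deriv
      simp only [this]
      exact two_inner_le _ _) ht
  rw [intervalIntegral.integral_add (c1.intervalIntegrable _ _) (c2.intervalIntegrable _ _)] at this
  simp only [sub_zero] at this
  linarith


theorem ibp {w z : ℝ → ℝ → ℂ} (hw : Sm w) (hz : Sm z) (t : ℝ) (h0 : z 0 t = 0) (h1 : z 1 t = 0)
    (h0' : dx z 0 t = 0) (h1' : dx z 1 t = 0) :
    ∫ x in (0:ℝ)..1, inner ℝ (w x t) (dx (dx z) x t)
      = ∫ x in (0:ℝ)..1, inner ℝ (dx (dx w) x t) (z x t) := by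
  have c1 := hw.contx t
  have c2 := hw.dx.dx.contx t
  have c3 := hz.contx t
  have c4 := hz.dx.dx.contx t
  have hd : ∀ x ∈ Set.uIcc (0:ℝ) 1, HasDerivAt
      (fun x => (inner ℝ (w x t) (dx z x t) : ℝ) - inner ℝ (dx w x t) (z x t))
      (inner ℝ (w x t) (dx (dx z) x t) - inner ℝ (dx (dx w) x t) (z x t)) x := by
    intro x _
    have a1 := (hw.hdx x t).inner ℝ (hz.dx.hdx x t)
    have a2 := (hw.dx.hdx x t).inner ℝ (hz.hdx x t)
    refine HasDerivAt.congr_deriv (a1.sub a2) ?_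
    ring
  have := intervalIntegral.integral_eq_sub_of_hasDerivAt hd
    (Continuous.intervalIntegrable (by fun_prop) _ _)
  rw [intervalIntegral.integral_sub (Continuous.intervalIntegrable (by fun_prop) _ _)
    (Continuous.intervalIntegrable (by fun_prop) _ _)] at this
  simp only [h0, h1, h0', h1', inner_zero_right, sub_self] at this
  linarith

/-- the energy estimate for one smooth function -/
theorem energy {T c₀ B K : ℝ} (hc₀ : 0 < c₀) (hB : 0 ≤ B) (hK : 0 ≤ K)
    {c : ℝ → ℝ → ℝ} (hc : Sm c) (hct : dt c = 0)
    (hcl : ∀ x ∈ Set.Icc (0:ℝ) 1, ∀ t ∈ Set.Icc (0:ℝ) T, c₀ ≤ c x t)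
    {b : ℝ → ℝ → ℝ}
    (hbB : ∀ x ∈ Set.Icc (0:ℝ) 1, ∀ t ∈ Set.Icc (0:ℝ) T, |b x t| ≤ B)
    {v G : ℝ → ℝ → ℂ} (hv : Sm v) (hG : Sm G)
    (hpde : ∀ x ∈ Set.Icc (0:ℝ) 1, ∀ t ∈ Set.Icc (0:ℝ) T,
      dt (dt v) x t + dx (dx (ml c (dx (dx v)))) x t + b x t • dx (dx v) x t = G x t)
    (hbc : ∀ t ∈ Set.Icc (0:ℝ) T, dt v 0 t = 0 ∧ dt v 1 t = 0 ∧
      dx (dt v) 0 t = 0 ∧ dx (dt v) 1 t = 0)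
    (hGK : ∀ t ∈ Set.Icc (0:ℝ) T, ∫ x in (0:ℝ)..1, ‖G x t‖ ^ 2 ≤ K) :
    ∀ t ∈ Set.Icc (0:ℝ) T,
      ∫ x in (0:ℝ)..1, (‖dt v x t‖ ^ 2 + c x t * ‖dx (dx v) x t‖ ^ 2) ≤
      ((∫ x in (0:ℝ)..1, (‖dt v x 0‖ ^ 2 + c x 0 * ‖dx (dx v) x 0‖ ^ 2)) + K * T) *
        Real.exp ((1 + B + B / c₀) * T) := by
  set e : ℝ → ℝ → ℝ := fun x t => ‖dt v x t‖ ^ 2 + c x t * ‖dx (dx v) x t‖ ^ 2 with he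
  set lam := 1 + B + B / c₀ with hlam
  have hlam0 : 0 ≤ lam := by positivity
  have hse : Sm e := ContDiff.add (sm_normsq hv.dt) (ContDiff.mul hc (sm_normsq hv.dx.dx))
  set w := ml c (dx (dx v)) with hw
  have hsw : Sm w := hc.ml hv.dx.dx
  have hder : ∀ x t, dt e x t = 2 * inner ℝ (dt v x t) (dt (dt v) x t)
      + 2 * inner ℝ (w x t) (dx (dx (dt v)) x t) := by
    intro x t
    have h1 := (dt_normsq hv.dt x t).add ((hc.hdt x t).mul (dt_normsq hv.dx.dx x t))
    have h2 : dt e x t = _ := h1.deriv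
    rw [h2, hct, dt_dx hv.dx, dt_dx hv, hw]
    simp only [ml, Pi.zero_apply, zero_mul, zero_add, real_inner_smul_left]
    ring
  have hE' : ∀ t ∈ Set.Icc (0:ℝ) T, ∫ x in (0:ℝ)..1, dt e x t
      ≤ K + lam * ∫ x in (0:ℝ)..1, e x t := by
    intro t ht
    obtain ⟨b1, b2, b3, b4⟩ := hbc t ht
    have c1 := hv.dt.contx t
    have c2 := hv.dt.dt.contx t
    have c3 := hsw.contx t
    have c4 := hv.dt.dx.dx.contx t
    have c5 := hsw.dx.dx.contx t
    have c6 := hG.contx t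
    have c7 := hse.contx t
    have i1 : ∫ x in (0:ℝ)..1, dt e x t = ∫ x in (0:ℝ)..1,
        2 * inner ℝ (dt v x t) (dt (dt v) x t + dx (dx w) x t) := by
      simp only [hder, inner_add_right, mul_add]
      rw [intervalIntegral.integral_add (Continuous.intervalIntegrable (by fun_prop) _ _)
        (Continuous.intervalIntegrable (by fun_prop) _ _),
        intervalIntegral.integral_add (Continuous.intervalIntegrable (by fun_prop) _ _)
        (Continuous.intervalIntegrable (by fun_prop) _ _)]
      congr 1
      rw [intervalIntegral.integral_const_mul, intervalIntegral.integral_const_mul,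
        ibp hsw hv.dt t b1 b2 b3 b4]
      simp only [real_inner_comm]
    rw [i1]
    have i2 : ∫ x in (0:ℝ)..1, 2 * inner ℝ (dt v x t) (dt (dt v) x t + dx (dx w) x t)
        ≤ ∫ x in (0:ℝ)..1, (‖G x t‖ ^ 2 + lam * e x t) := by
      refine intervalIntegral.integral_mono_on zero_le_one
        (Continuous.intervalIntegrable (by fun_prop) _ _)
        (Continuous.intervalIntegrable (by fun_prop) _ _) fun x hx => ?_
      have p1 : dt (dt v) x t + dx (dx w) x t = G x t - b x t • dx (dx v) x t := by
        rw [← hpde x hx t ht]; abel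
      rw [p1, inner_sub_right, real_inner_smul_right, mul_sub]
      have p2 := (le_abs_self _).trans (two_inner_le (dt v x t) (G x t))
      have p3 := two_inner_le (dt v x t) (dx (dx v) x t)
      have p4 : -(2 * (b x t * inner ℝ (dt v x t) (dx (dx v) x t)))
          ≤ B * (‖dt v x t‖ ^ 2 + ‖dx (dx v) x t‖ ^ 2) := by
        calc -(2 * (b x t * inner ℝ (dt v x t) (dx (dx v) x t)))
            ≤ |b x t * (2 * inner ℝ (dt v x t) (dx (dx v) x t))| := by
              refine le_trans (le_of_eq ?_) (neg_le_abs _); ring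
          _ = |b x t| * |2 * inner ℝ (dt v x t) (dx (dx v) x t)| := abs_mul _ _
          _ ≤ _ := mul_le_mul (hbB x hx t ht) p3 (abs_nonneg _) hB
      have p5 := hcl x hx t ht
      have p6 : B * ‖dx (dx v) x t‖ ^ 2 ≤ B / c₀ * (c x t * ‖dx (dx v) x t‖ ^ 2) := by
        rw [div_mul_eq_mul_div, le_div_iff₀ hc₀]
        have : 0 ≤ B * ‖dx (dx v) x t‖ ^ 2 := by positivity
        nlinarith
      have p7 : 0 ≤ c x t * ‖dx (dx v) x t‖ ^ 2 := by
        have : 0 ≤ c x t := hc₀.le.trans p5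
        positivity
      have p8 : 0 ≤ ‖dt v x t‖ ^ 2 := by positivity
      have p9 : 0 ≤ B / c₀ := by positivity
      simp only [he, hlam]
      nlinarith [mul_nonneg p9 p8, mul_nonneg hB p7]
    refine i2.trans ?_
    rw [intervalIntegral.integral_add (Continuous.intervalIntegrable (by fun_prop) _ _)
        (Continuous.intervalIntegrable (by fun_prop) _ _), intervalIntegral.integral_const_mul]
    linarith [hGK t ht]
  intro t ht
  set E : ℝ → ℝ := fun s => ∫ x in (0:ℝ)..1, e x s with hE
  have hanti : AntitoneOn (fun s => Real.exp (-lam * s) * E s - K * s) (Set.Icc 0 T) := by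
    have hd : ∀ s, HasDerivAt (fun s => Real.exp (-lam * s) * E s - K * s)
        ((Real.exp (-lam * s) * (-lam * 1)) * E s +
          Real.exp (-lam * s) * (∫ x in (0:ℝ)..1, dt e x s) - K * 1) s := fun s =>
      ((((hasDerivAt_id s).const_mul (-lam)).exp.mul (hasDerivAt_int hse s))).sub
        ((hasDerivAt_id s).const_mul K)
    refine antitoneOn_of_deriv_nonpos (convex_Icc _ _)
      (fun s _ => (hd s).continuousAt.continuousWithinAt)
      (fun s _ => (hd s).differentiableAt.differentiableWithinAt) fun s hs => ?_
    rw [interior_Icc] at hs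
    rw [(hd s).deriv]
    have h1 := hE' s ⟨hs.1.le, hs.2.le⟩
    have h2 : Real.exp (-lam * s) ≤ 1 := Real.exp_le_one_iff.2 (by nlinarith [hs.1])
    have h3 := Real.exp_pos (-lam * s)
    have h4 : Real.exp (-lam * s) * ((∫ x in (0:ℝ)..1, dt e x s) - lam * E s) ≤ 1 * K := by
      refine (mul_le_mul_of_nonneg_left (b := (∫ x in (0:ℝ)..1, dt e x s) - lam * E s)
        (c := K) (by linarith) h3.le).trans ?_
      exact mul_le_mul_of_nonneg_right h2 hK
    linarith
  have h0T : (0:ℝ) ∈ Set.Icc 0 T := ⟨le_rfl, ht.1.trans ht.2⟩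
  have hfin := hanti h0T ht ht.1
  simp only [mul_zero, Real.exp_zero, one_mul, sub_zero] at hfin
  have hexp : E t = Real.exp (lam * t) * (Real.exp (-lam * t) * E t) := by
    rw [← mul_assoc, ← Real.exp_add]; simp
  have hE0 : 0 ≤ E 0 := intervalIntegral.integral_nonneg zero_le_one fun x hx => by
    have : 0 ≤ c x 0 := hc₀.le.trans (hcl x hx 0 h0T)
    simp only [he]; positivity
  have hKt : K * t ≤ K * T := mul_le_mul_of_nonneg_left ht.2 hK
  have hKt0 : 0 ≤ K * t := mul_nonneg hK ht.1
  show E t ≤ (E 0 + K * T) * Real.exp (lam * T)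
  rw [hexp, mul_comm (E 0 + K * T)]
  refine mul_le_mul (Real.exp_le_exp.2 (mul_le_mul_of_nonneg_left ht.2 hlam0)) (by linarith)
    ?_ (Real.exp_pos _).le
  have : 0 ≤ E t := intervalIntegral.integral_nonneg zero_le_one fun x hx => by
    have : 0 ≤ c x t := hc₀.le.trans (hcl x hx t ht)
    simp only [he]; positivity
  exact mul_nonneg (Real.exp_pos _).le this

end Beam
/-! ### Nets and slow scale bounds -/

namespace Beam

abbrev Idx := Set.Ioc (0:ℝ) 1

def LF : Filter Idx := Filter.comap Subtype.val (𝓝[>] (0:ℝ))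

theorem eventually_LF {P : Idx → Prop} : (∀ᶠ i in LF, P i) ↔
    ∃ ε₀ ∈ Set.Ioc (0:ℝ) 1, ∀ i : Idx, (i:ℝ) ≤ ε₀ → P i := by
  unfold LF
  rw [Filter.eventually_comap, eventually_nhdsWithin_iff, Metric.eventually_nhds_iff]
  constructor
  · rintro ⟨d, hd, h⟩
    refine ⟨min (d/2) 1, ⟨by positivity, min_le_right _ _⟩, fun i hi => ?_⟩
    have h1 := i.2.1
    have h2 := hi.trans (min_le_left _ _)
    refine h (y := (i:ℝ)) ?_ h1 i rfl
    rw [Real.dist_eq, sub_zero, abs_of_pos h1]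
    linarith
  · rintro ⟨e, he, h⟩
    refine ⟨e, he.1, fun y hy hy0 i hi => h i ?_⟩
    rw [Real.dist_eq, sub_zero] at hy
    rw [hi]; exact (le_abs_self _).trans hy.le

def Slow (s : Idx → ℝ) : Prop := ∀ p : ℕ, ∃ C : ℝ, ∀ᶠ i in LF, |s i| ^ p ≤ C * (i:ℝ)⁻¹

theorem slow_of_net {s : ℝ → ℝ} (h : SlowScaleNet s) : Slow (fun i => s i) := by
  intro p
  obtain ⟨C, hC⟩ := (h p).bound
  refine ⟨C, ?_⟩
  unfold LF
  refine Filter.Eventually.mono (Filter.tendsto_comap.eventually hC) fun i hi => ?_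
  have h1 : (0:ℝ) < (i:ℝ)⁻¹ := inv_pos.2 i.2.1
  rwa [Real.norm_of_nonneg (by positivity), Real.norm_of_nonneg h1.le] at hi

theorem Slow.mono {s q : Idx → ℝ} (hs : Slow s) (h : ∀ᶠ i in LF, |q i| ≤ |s i|) : Slow q := by
  intro p
  obtain ⟨C, hC⟩ := hs p
  exact ⟨C, by filter_upwards [hC, h] with i h1 h2 using
    (pow_le_pow_left₀ (abs_nonneg _) h2 p).trans h1⟩

theorem Slow.const (a : ℝ) : Slow (fun _ => a) := by
  intro p
  refine ⟨|a| ^ p, Filter.Eventually.of_forall fun i => ?_⟩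
  exact le_mul_of_one_le_right (by positivity) ((one_le_inv₀ i.2.1).2 i.2.2)

theorem Slow.add {s q : Idx → ℝ} (hs : Slow s) (hq : Slow q) : Slow (fun i => s i + q i) := by
  intro p
  obtain ⟨C, hC⟩ := hs p
  obtain ⟨C', hC'⟩ := hq p
  refine ⟨2 ^ (p - 1) * (C + C'), ?_⟩
  filter_upwards [hC, hC'] with i h1 h2
  calc |s i + q i| ^ p ≤ (|s i| + |q i|) ^ p := pow_le_pow_left₀ (abs_nonneg _) (abs_add_le _ _) p
    _ ≤ 2 ^ (p-1) * (|s i| ^ p + |q i| ^ p) := add_pow_le (abs_nonneg _) (abs_nonneg _) p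
    _ ≤ 2 ^ (p-1) * (C * (i:ℝ)⁻¹ + C' * (i:ℝ)⁻¹) := by gcongr
    _ = _ := by ring

theorem Slow.mul {s q : Idx → ℝ} (hs : Slow s) (hq : Slow q) : Slow (fun i => s i * q i) := by
  intro p
  obtain ⟨C, hC⟩ := hs (2 * p)
  obtain ⟨C', hC'⟩ := hq (2 * p)
  refine ⟨C + C', ?_⟩
  filter_upwards [hC, hC'] with i h1 h2
  rw [abs_mul, mul_pow]
  rw [mul_comm 2 p, pow_mul] at h1 h2
  have h3 : 0 ≤ (|s i| ^ p) := by positivity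
  have h4 : 0 ≤ (|q i| ^ p) := by positivity
  nlinarith [sq_nonneg (|s i| ^ p - |q i| ^ p), mul_nonneg h3 h4]

theorem Slow.abs {s : Idx → ℝ} (hs : Slow s) : Slow (fun i => |s i|) :=
  hs.mono (Filter.Eventually.of_forall fun i => by simp)

theorem Slow.pow {s : Idx → ℝ} (hs : Slow s) (n : ℕ) : Slow (fun i => s i ^ n) := by
  intro p
  obtain ⟨C, hC⟩ := hs (n * p)
  exact ⟨C, by filter_upwards [hC] with i h1; rwa [abs_pow, ← pow_mul]⟩

/-- pointwise slow scale bound relative to the size `A` -/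
def Bd {F : Type*} [NormedAddCommGroup F] (S : Set ℝ) (A : Idx → ℝ) (h : Idx → ℝ → ℝ → F) : Prop :=
  ∃ s : Idx → ℝ, Slow s ∧ (∀ i, 0 ≤ s i) ∧
    ∀ᶠ i in LF, ∀ x ∈ Set.Icc (0:ℝ) 1, ∀ t ∈ S, ‖h i x t‖ ≤ s i * A i

/-- `L²` in space slow scale bound relative to the size `A` -/
def Bd2 (T : ℝ) (A : Idx → ℝ) (h : Idx → ℝ → ℝ → ℂ) : Prop :=
  ∃ s : Idx → ℝ, Slow s ∧ (∀ i, 0 ≤ s i) ∧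
    ∀ᶠ i in LF, ∀ t ∈ Set.Icc (0:ℝ) T, ∫ x in (0:ℝ)..1, ‖h i x t‖ ^ 2 ≤ s i * A i ^ 2

theorem Bd.of {F : Type*} [NormedAddCommGroup F] {S : Set ℝ} {A : Idx → ℝ} (hA : ∀ i, 0 ≤ A i)
    {h : Idx → ℝ → ℝ → F} {s : Idx → ℝ} (hs : Slow s)
    (hb : ∀ᶠ i in LF, ∀ x ∈ Set.Icc (0:ℝ) 1, ∀ t ∈ S, ‖h i x t‖ ≤ s i * A i) : Bd S A h := by
  refine ⟨fun i => |s i|, hs.abs, fun i => abs_nonneg _, ?_⟩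
  filter_upwards [hb] with i hi x hx t ht
  exact (hi x hx t ht).trans (mul_le_mul_of_nonneg_right (le_abs_self _) (hA i))

theorem Bd2.of {T : ℝ} {A : Idx → ℝ}
    {h : Idx → ℝ → ℝ → ℂ} {s : Idx → ℝ} (hs : Slow s)
    (hb : ∀ᶠ i in LF, ∀ t ∈ Set.Icc (0:ℝ) T, ∫ x in (0:ℝ)..1, ‖h i x t‖ ^ 2 ≤ s i * A i ^ 2) :
    Bd2 T A h := by
  refine ⟨fun i => |s i|, hs.abs, fun i => abs_nonneg _, ?_⟩
  filter_upwards [hb] with i hi t ht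
  exact (hi t ht).trans (mul_le_mul_of_nonneg_right (le_abs_self _) (sq_nonneg _))

theorem Bd.mono {F : Type*} [NormedAddCommGroup F] {S S' : Set ℝ} {A : Idx → ℝ}
    {h : Idx → ℝ → ℝ → F} (hb : Bd S A h) (hS : S' ⊆ S) : Bd S' A h := by
  obtain ⟨s, h1, h2, h3⟩ := hb
  exact ⟨s, h1, h2, by filter_upwards [h3] with i hi x hx t ht using hi x hx t (hS ht)⟩

def Q (T : ℝ) (f : Idx → ℝ → ℝ → ℝ) : Prop :=
  (∀ i, Sm (f i)) ∧ ∀ k l, Bd (Set.Icc 0 T) 1 (fun i => D k l (f i))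

theorem Q.dx {T : ℝ} {f : Idx → ℝ → ℝ → ℝ} (h : Q T f) : Q T (fun i => dx (f i)) :=
  ⟨fun i => (h.1 i).dx, fun k l => by simpa only [fun i => D_dx (h.1 i) k l] using h.2 (k+1) l⟩

theorem Q.dt {T : ℝ} {f : Idx → ℝ → ℝ → ℝ} (h : Q T f) : Q T (fun i => dt (f i)) :=
  ⟨fun i => (h.1 i).dt, fun k l => h.2 k (l+1)⟩

structure Good (T : ℝ) (P : (Idx → ℝ → ℝ → ℂ) → Prop) : Prop where
  zero : P (fun _ => 0)
  add : ∀ a b : Idx → ℝ → ℝ → ℂ, (∀ i, Sm (a i)) → (∀ i, Sm (b i)) → P a → P b →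
    P (fun i => a i + b i)
  sub : ∀ a b : Idx → ℝ → ℝ → ℂ, (∀ i, Sm (a i)) → (∀ i, Sm (b i)) → P a → P b →
    P (fun i => a i - b i)
  mul : ∀ (f : Idx → ℝ → ℝ → ℝ) (a : Idx → ℝ → ℝ → ℂ), Q T f → (∀ i, Sm (a i)) → P a →
    P (fun i => ml (f i) (a i))

theorem good_Bd {T : ℝ} {S : Set ℝ} (hS : S ⊆ Set.Icc 0 T) {A : Idx → ℝ} (hA : ∀ i, 0 ≤ A i) :
    Good T (Bd S A) where
  zero := Bd.of hA (Slow.const 0) (Filter.Eventually.of_forall fun i x _ t _ => by simp)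
  add a b _ _ := by
    rintro ⟨s, s1, s2, s3⟩ ⟨q, q1, q2, q3⟩
    refine Bd.of hA (s1.add q1) ?_
    filter_upwards [s3, q3] with i h1 h2 x hx t ht
    rw [add_mul]
    exact (norm_add_le _ _).trans (add_le_add (h1 x hx t ht) (h2 x hx t ht))
  sub a b _ _ := by
    rintro ⟨s, s1, s2, s3⟩ ⟨q, q1, q2, q3⟩
    refine Bd.of hA (s1.add q1) ?_
    filter_upwards [s3, q3] with i h1 h2 x hx t ht
    rw [add_mul]
    exact (norm_sub_le _ _).trans (add_le_add (h1 x hx t ht) (h2 x hx t ht))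
  mul f a hf _ := by
    rintro ⟨s, s1, s2, s3⟩
    obtain ⟨q, q1, q2, q3⟩ := hf.2 0 0
    refine Bd.of hA (q1.mul s1) ?_
    filter_upwards [s3, q3] with i h1 h2 x hx t ht
    have h3 := h2 x hx t (hS ht)
    simp only [D_zero, Pi.one_apply, mul_one] at h3
    simp only [ml, norm_smul]
    rw [mul_assoc]
    exact mul_le_mul h3 (h1 x hx t ht) (norm_nonneg _) (q2 i)

theorem sq_add_le (a b : ℂ) : ‖a + b‖ ^ 2 ≤ 2 * ‖a‖ ^ 2 + 2 * ‖b‖ ^ 2 := by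
  have h := norm_add_le a b
  nlinarith [sq_nonneg (‖a‖ - ‖b‖), norm_nonneg (a + b), norm_nonneg a, norm_nonneg b]

theorem sq_sub_le (a b : ℂ) : ‖a - b‖ ^ 2 ≤ 2 * ‖a‖ ^ 2 + 2 * ‖b‖ ^ 2 := by
  have := sq_add_le a (-b)
  rwa [norm_neg, ← sub_eq_add_neg] at this

theorem int_sq {a b d : ℝ → ℂ} (ha : Continuous a) (hb : Continuous b) (hd : Continuous d)
    (h : ∀ x, ‖d x‖ ^ 2 ≤ 2 * ‖a x‖ ^ 2 + 2 * ‖b x‖ ^ 2) :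
    ∫ x in (0:ℝ)..1, ‖d x‖ ^ 2 ≤
      2 * (∫ x in (0:ℝ)..1, ‖a x‖ ^ 2) + 2 * ∫ x in (0:ℝ)..1, ‖b x‖ ^ 2 := by
  rw [← intervalIntegral.integral_const_mul, ← intervalIntegral.integral_const_mul,
    ← intervalIntegral.integral_add (Continuous.intervalIntegrable (by fun_prop) _ _)
      (Continuous.intervalIntegrable (by fun_prop) _ _)]
  exact intervalIntegral.integral_mono zero_le_one (Continuous.intervalIntegrable (by fun_prop) _ _)
      (Continuous.intervalIntegrable (by fun_prop) _ _) h

theorem good_Bd2 {T : ℝ} {A : Idx → ℝ} : Good T (Bd2 T A) where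
  zero := Bd2.of (Slow.const 0) (Filter.Eventually.of_forall fun i t _ => by simp)
  add a b ha hb := by
    rintro ⟨s, s1, s2, s3⟩ ⟨q, q1, q2, q3⟩
    refine Bd2.of (((Slow.const 2).mul s1).add ((Slow.const 2).mul q1)) ?_
    filter_upwards [s3, q3] with i h1 h2 t ht
    have := int_sq ((ha i).contx t) ((hb i).contx t) (((ha i).add (hb i)).contx t)
      (fun x => sq_add_le _ _)
    linarith [h1 t ht, h2 t ht]
  sub a b ha hb := by
    rintro ⟨s, s1, s2, s3⟩ ⟨q, q1, q2, q3⟩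
    refine Bd2.of (((Slow.const 2).mul s1).add ((Slow.const 2).mul q1)) ?_
    filter_upwards [s3, q3] with i h1 h2 t ht
    have := int_sq ((ha i).contx t) ((hb i).contx t) (((ha i).sub (hb i)).contx t)
      (fun x => sq_sub_le _ _)
    linarith [h1 t ht, h2 t ht]
  mul f a hf ha := by
    rintro ⟨s, s1, s2, s3⟩
    obtain ⟨q, q1, q2, q3⟩ := hf.2 0 0
    refine Bd2.of ((q1.pow 2).mul s1) ?_
    filter_upwards [s3, q3] with i h1 h2 t ht
    have c1 := (ha i).contx t
    have c2 := (hf.1 i).contx t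
    have : ∫ x in (0:ℝ)..1, ‖ml (f i) (a i) x t‖ ^ 2 ≤ ∫ x in (0:ℝ)..1, q i ^ 2 * ‖a i x t‖ ^ 2 := by
      simp only [ml]
      refine intervalIntegral.integral_mono_on zero_le_one
        (Continuous.intervalIntegrable (by fun_prop) _ _)
        (Continuous.intervalIntegrable (by fun_prop) _ _) fun x hx => ?_
      have h3 := h2 x hx t ht
      simp only [D_zero, Pi.one_apply, mul_one] at h3
      rw [norm_smul, mul_pow]
      gcongr
    refine this.trans ?_
    rw [intervalIntegral.integral_const_mul, mul_assoc]
    exact mul_le_mul_of_nonneg_left (h1 t ht) (sq_nonneg _)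

theorem leib {T : ℝ} {P : (Idx → ℝ → ℝ → ℂ) → Prop} (hP : Good T P) (l k : ℕ) :
    ∀ (f : Idx → ℝ → ℝ → ℝ) (a : Idx → ℝ → ℝ → ℂ), Q T f → (∀ i, Sm (a i)) →
      (∀ p q, p ≤ k → q ≤ l → P (fun i => D p q (a i))) →
      P (fun i => D k l (ml (f i) (a i))) := by
  induction l generalizing k with
  | succ l ih =>
    intro f a hf ha h
    have e : (fun i => D k (l+1) (ml (f i) (a i))) =
        fun i => D k l (ml (dt (f i)) (a i)) + D k l (ml (f i) (dt (a i))) := by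
      funext i
      rw [← D_dt, dt_ml (hf.1 i) (ha i), D_add ((hf.1 i).dt.ml (ha i)) ((hf.1 i).ml (ha i).dt)]
    rw [e]
    refine hP.add _ _ (fun i => ((hf.1 i).dt.ml (ha i)).D _ _)
      (fun i => ((hf.1 i).ml (ha i).dt).D _ _) ?_ ?_
    · exact ih k _ _ hf.dt ha fun p q hp hq => h p q hp (by omega)
    · exact ih k _ _ hf (fun i => (ha i).dt) fun p q hp hq => h p (q+1) hp (by omega)
  | zero =>
    induction k with
    | succ k ih =>
      intro f a hf ha h
      have e : (fun i => D (k+1) 0 (ml (f i) (a i))) =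
          fun i => D k 0 (ml (dx (f i)) (a i)) + D k 0 (ml (f i) (dx (a i))) := by
        funext i
        rw [← D_dx ((hf.1 i).ml (ha i)), dx_ml (hf.1 i) (ha i),
          D_add ((hf.1 i).dx.ml (ha i)) ((hf.1 i).ml (ha i).dx)]
      rw [e]
      refine hP.add _ _ (fun i => ((hf.1 i).dx.ml (ha i)).D _ _)
        (fun i => ((hf.1 i).ml (ha i).dx).D _ _) ?_ ?_
      · exact ih _ _ hf.dx ha fun p q hp hq => h p q (by omega) hq
      · refine ih _ _ hf (fun i => (ha i).dx) fun p q hp hq => ?_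
        simpa only [fun i => D_dx (ha i) p q] using h (p+1) q (by omega) hq
    | zero =>
      intro f a hf ha h
      exact hP.mul f a hf ha (h 0 0 le_rfl le_rfl)

theorem comm {T : ℝ} {P : (Idx → ℝ → ℝ → ℂ) → Prop} (hP : Good T P) (l k : ℕ) :
    ∀ (f : Idx → ℝ → ℝ → ℝ) (a : Idx → ℝ → ℝ → ℂ), Q T f → (∀ i, Sm (a i)) →
      (∀ p q, p ≤ k → q ≤ l → (p < k ∨ q < l) → P (fun i => D p q (a i))) →
      P (fun i => D k l (ml (f i) (a i)) - ml (f i) (D k l (a i))) := by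
  induction l generalizing k with
  | succ l ih =>
    intro f a hf ha h
    have e : (fun i => D k (l+1) (ml (f i) (a i)) - ml (f i) (D k (l+1) (a i))) =
        fun i => D k l (ml (dt (f i)) (a i)) +
          (D k l (ml (f i) (dt (a i))) - ml (f i) (D k l (dt (a i)))) := by
      funext i
      rw [← D_dt, dt_ml (hf.1 i) (ha i), D_add ((hf.1 i).dt.ml (ha i)) ((hf.1 i).ml (ha i).dt),
        D_dt (a i), add_sub_assoc]
    rw [e]
    refine hP.add _ _ (fun i => ((hf.1 i).dt.ml (ha i)).D _ _)
      (fun i => (((hf.1 i).ml (ha i).dt).D _ _).sub ((hf.1 i).ml ((ha i).dt.D _ _))) ?_ ?_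
    · exact leib hP l k _ _ hf.dt ha fun p q hp hq => h p q hp (by omega) (by omega)
    · exact ih k _ _ hf (fun i => (ha i).dt) fun p q hp hq hpq =>
        h p (q+1) hp (by omega) (by omega)
  | zero =>
    induction k with
    | succ k ih =>
      intro f a hf ha h
      have e : (fun i => D (k+1) 0 (ml (f i) (a i)) - ml (f i) (D (k+1) 0 (a i))) =
          fun i => D k 0 (ml (dx (f i)) (a i)) +
            (D k 0 (ml (f i) (dx (a i))) - ml (f i) (D k 0 (dx (a i)))) := by
        funext i
        rw [← D_dx ((hf.1 i).ml (ha i)), dx_ml (hf.1 i) (ha i),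
          D_add ((hf.1 i).dx.ml (ha i)) ((hf.1 i).ml (ha i).dx), D_dx (ha i), add_sub_assoc]
      rw [e]
      refine hP.add _ _ (fun i => ((hf.1 i).dx.ml (ha i)).D _ _)
        (fun i => (((hf.1 i).ml (ha i).dx).D _ _).sub ((hf.1 i).ml ((ha i).dx.D _ _))) ?_ ?_
      · exact leib hP 0 k _ _ hf.dx ha fun p q hp hq => h p q (by omega) hq (by omega)
      · refine ih _ _ hf (fun i => (ha i).dx) fun p q hp hq hpq => ?_
        simpa only [fun i => D_dx (ha i) p q] using h (p+1) q (by omega) hq (by omega)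
    | zero =>
      intro f a hf ha h
      simpa only [D_zero, sub_self] using hP.zero

theorem Bd.toBd2 {T : ℝ} {A : Idx → ℝ} {a : Idx → ℝ → ℝ → ℂ} (ha : ∀ i, Sm (a i))
    (h : Bd (Set.Icc 0 T) A a) : Bd2 T A a := by
  obtain ⟨s, s1, s2, s3⟩ := h
  refine Bd2.of (s1.pow 2) ?_
  filter_upwards [s3] with i hi t ht
  have := intervalIntegral.integral_mono_on (μ := volume) (a := (0:ℝ)) (b := 1)
    (f := fun x => ‖a i x t‖ ^ 2) (g := fun _ => (s i * A i) ^ 2) zero_le_one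
    ((((ha i).contx t).norm.pow 2).intervalIntegrable _ _) intervalIntegrable_const
    (fun x hx => pow_le_pow_left₀ (norm_nonneg _) (hi x hx t ht) 2)
  simpa [mul_pow] using this

/-- `L¹` consequence of an `L²` bound -/
theorem Bd2.l1 {T : ℝ} {A : Idx → ℝ} (hA : ∀ i, 0 ≤ A i) {a : Idx → ℝ → ℝ → ℂ}
    (ha : ∀ i, Sm (a i)) (h : Bd2 T A a) : ∃ s : Idx → ℝ, Slow s ∧
      ∀ᶠ i in LF, ∀ t ∈ Set.Icc (0:ℝ) T, ∫ x in (0:ℝ)..1, ‖a i x t‖ ≤ s i * A i := by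
  obtain ⟨s, s1, s2, s3⟩ := h
  refine ⟨fun i => 1 + s i, (Slow.const 1).add s1, ?_⟩
  filter_upwards [s3] with i hi t ht
  have h1 := s2 i
  refine l1_le_l2 ((ha i).contx t) (mul_nonneg (by linarith) (hA i)) ((hi t ht).trans ?_)
  rw [mul_pow]
  exact mul_le_mul_of_nonneg_right (by nlinarith) (sq_nonneg _)

theorem Bd2.toBd {T : ℝ} {A : Idx → ℝ} (hA : ∀ i, 0 ≤ A i) {a : Idx → ℝ → ℝ → ℂ}
    (ha : ∀ i, Sm (a i)) (h : Bd2 T A a) (h' : Bd2 T A (fun i => dx (a i))) :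
    Bd (Set.Icc 0 T) A a := by
  obtain ⟨s, s1, s2, s3⟩ := h
  obtain ⟨q, q1, q2, q3⟩ := h'
  refine Bd.of hA ((Slow.const 1).add (((Slow.const 2).mul s1).add q1)) ?_
  filter_upwards [s3, q3] with i hi hi' x hx t ht
  have h1 := sob_x (ha i) t hx
  have h2 := s2 i
  have h3 := q2 i
  refine abs_le_of_sq_le_sq' ?_ (mul_nonneg (by linarith) (hA i)) |>.2
  rw [mul_pow]
  have h4 : (2 * s i + q i) * A i ^ 2 ≤ (1 + (2 * s i + q i)) ^ 2 * A i ^ 2 :=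
    mul_le_mul_of_nonneg_right (by nlinarith) (sq_nonneg _)
  linarith [hi t ht, hi' t ht]

theorem Bd2.toBd_zero {T : ℝ} {A : Idx → ℝ} (hA : ∀ i, 0 ≤ A i) {a : Idx → ℝ → ℝ → ℂ}
    (ha : ∀ i, Sm (a i)) (h0 : ∀ i, ∀ t ∈ Set.Icc (0:ℝ) T, a i 0 t = 0)
    (h : Bd2 T A (fun i => dx (a i))) : Bd (Set.Icc 0 T) A a := by
  obtain ⟨s, s1, s3⟩ := h.l1 hA (fun i => (ha i).dx)
  refine Bd.of hA s1 ?_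
  filter_upwards [s3] with i hi x hx t ht
  have := norm_sub_le_int (fun y => (ha i).hdx y t) ((ha i).dx.contx t) hx
    (y := 0) ⟨le_rfl, zero_le_one⟩
  rw [h0 i t ht, sub_zero] at this
  exact this.trans (hi t ht)

theorem Bd.interp {T : ℝ} {A : Idx → ℝ} (hA : ∀ i, 0 ≤ A i) {a : Idx → ℝ → ℝ → ℂ}
    (ha : ∀ i, Sm (a i)) (h : Bd2 T A a) (h' : Bd2 T A (fun i => dx (dx (a i)))) :
    Bd (Set.Icc 0 T) A (fun i => dx (a i)) := by
  obtain ⟨s, s1, s3⟩ := h.l1 hA ha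
  obtain ⟨q, q1, q3⟩ := h'.l1 hA (fun i => (ha i).dx.dx)
  refine Bd.of hA (((Slow.const 2).mul q1).add ((Slow.const 4).mul s1)) ?_
  filter_upwards [s3, q3] with i hi hi' x hx t ht
  have := Beam.interp (fun y => (ha i).hdx y t) (fun y => (ha i).dx.hdx y t)
    ((ha i).dx.dx.contx t) hx
  linarith [hi t ht, hi' t ht]

end Beam
/-! ### The abstract regularity theorem -/

namespace Beam

structure Setup (T c₀ c₁ : ℝ) (A r : Idx → ℝ) (c b : Idx → ℝ → ℝ → ℝ)
    (g u : Idx → ℝ → ℝ → ℂ) : Prop where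
  hT : 0 < T
  hc₀ : 0 < c₀
  hA : ∀ i, 0 ≤ A i
  hc : Q T c
  hct : ∀ i, dt (c i) = 0
  hcl : ∀ i, ∀ x ∈ Set.Icc (0:ℝ) 1, ∀ t ∈ Set.Icc (0:ℝ) T, c₀ ≤ c i x t
  hcu : ∀ i, ∀ x ∈ Set.Icc (0:ℝ) 1, ∀ t ∈ Set.Icc (0:ℝ) T, c i x t ≤ c₁
  hb : Q T b
  hr : Slow r
  hr1 : ∀ i, 1 ≤ r i
  hblog : ∀ᶠ i in LF, ∀ x ∈ Set.Icc (0:ℝ) 1, ∀ t ∈ Set.Icc (0:ℝ) T, |b i x t| ≤ Real.log (r i)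
  hgs : ∀ i, Sm (g i)
  hg : ∀ k l, Bd (Set.Icc 0 T) A (fun i => D k l (g i))
  hu : ∀ i, Sm (u i)
  pde : ∀ i, D 0 2 (u i) + D 2 0 (ml (c i) (D 2 0 (u i))) + ml (b i) (D 2 0 (u i)) = g i
  init0 : ∀ k, Bd {0} A (fun i => D k 0 (u i))
  init1 : ∀ k, Bd {0} A (fun i => D k 1 (u i))
  bc : ∀ i, ∀ t ∈ Set.Icc (0:ℝ) T, u i 0 t = 0 ∧ u i 1 t = 0 ∧ dx (u i) 0 t = 0 ∧ dx (u i) 1 t = 0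

namespace Setup
variable {T c₀ c₁ : ℝ} {A r : Idx → ℝ} {c b : Idx → ℝ → ℝ → ℝ} {g u : Idx → ℝ → ℝ → ℂ}

theorem sc (H : Setup T c₀ c₁ A r c b g u) (i : Idx) : Sm (ml (c i) (D 2 0 (u i))) :=
  (H.hc.1 i).ml ((H.hu i).D _ _)

theorem sb (H : Setup T c₀ c₁ A r c b g u) (i : Idx) : Sm (ml (b i) (D 2 0 (u i))) :=
  (H.hb.1 i).ml ((H.hu i).D _ _)

theorem pdeD (H : Setup T c₀ c₁ A r c b g u) (i : Idx) (k l : ℕ) :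
    D k (l+2) (u i) + D (k+2) l (ml (c i) (D 2 0 (u i))) + D k l (ml (b i) (D 2 0 (u i)))
      = D k l (g i) := by
  rw [← H.pde i, D_add (((H.hu i).D _ _).add ((H.sc i).D _ _)) (H.sb i),
    D_add ((H.hu i).D _ _) ((H.sc i).D _ _), D_D (H.hu i), D_D (H.sc i)]
  simp

theorem dtc (H : Setup T c₀ c₁ A r c b g u) (i : Idx) {a : ℝ → ℝ → ℂ} (ha : Sm a) (l : ℕ) :
    D 0 l (ml (c i) a) = ml (c i) (D 0 l a) := by
  induction l with
  | zero => rfl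
  | succ l ih =>
    rw [← dt_D ((H.hc.1 i).ml ha), ih, dt_ml (H.hc.1 i) (ha.D _ _), H.hct i, dt_D ha]
    have : ml (0 : ℝ → ℝ → ℝ) (D 0 l a) = 0 := by funext x t; simp [ml]
    rw [this, zero_add]

theorem D_uxx (H : Setup T c₀ c₁ A r c b g u) (i : Idx) (k l : ℕ) :
    D k l (D 2 0 (u i)) = D (k+2) l (u i) := by rw [D_D (H.hu i)]; rfl

theorem T0 (H : Setup T c₀ c₁ A r c b g u) : (0:ℝ) ∈ Set.Icc (0:ℝ) T := ⟨le_rfl, H.hT.le⟩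

theorem init (H : Setup T c₀ c₁ A r c b g u) (l : ℕ) : ∀ k, Bd {0} A (fun i => D k l (u i)) := by
  have hS : ({0} : Set ℝ) ⊆ Set.Icc 0 T := by
    intro x hx; rw [Set.mem_singleton_iff.1 hx]; exact H.T0
  have hP := good_Bd hS H.hA
  induction l using Nat.strong_induction_on with
  | _ l ih =>
    intro k
    match l, ih with
    | 0, _ => exact H.init0 k
    | 1, _ => exact H.init1 k
    | l+2, ih =>
      have e : (fun i => D k (l+2) (u i)) = fun i => (D k l (g i)
          - D (k+2) l (ml (c i) (D 2 0 (u i)))) - D k l (ml (b i) (D 2 0 (u i))) := by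
        funext i; rw [← H.pdeD i k l]; abel
      rw [e]
      have hin : ∀ p q, q ≤ l → Bd {0} A (fun i => D p q (D 2 0 (u i))) := by
        intro p q hq
        simp only [H.D_uxx]
        exact ih q (by omega) _
      refine hP.sub _ _ (fun i => ((H.hgs i).D _ _).sub ((H.sc i).D _ _)) (fun i => (H.sb i).D _ _)
        (hP.sub _ _ (fun i => (H.hgs i).D _ _) (fun i => (H.sc i).D _ _) ?_ ?_) ?_
      · exact (H.hg k l).mono hS
      · exact leib hP l (k+2) c (fun i => D 2 0 (u i)) H.hc (fun i => (H.hu i).D _ _)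
          fun p q _ hq => hin p q hq
      · exact leib hP l k b (fun i => D 2 0 (u i)) H.hb (fun i => (H.hu i).D _ _)
          fun p q _ hq => hin p q hq

theorem bcD (H : Setup T c₀ c₁ A r c b g u) (i : Idx) (l : ℕ) : ∀ t ∈ Set.Icc (0:ℝ) T,
    D 0 l (u i) 0 t = 0 ∧ D 0 l (u i) 1 t = 0 ∧ D 1 l (u i) 0 t = 0 ∧ D 1 l (u i) 1 t = 0 := by
  induction l with
  | zero => exact H.bc i
  | succ l ih =>
    have key : ∀ k x, (∀ t ∈ Set.Icc (0:ℝ) T, D k l (u i) x t = 0) →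
        ∀ t ∈ Set.Icc (0:ℝ) T, D k (l+1) (u i) x t = 0 := by
      intro k x h t ht
      rw [← dt_D (H.hu i)]
      have := deriv_congr_Icc H.hT (fun s => (((H.hu i).D k l).hdt x s).differentiableAt)
        (differentiable_const (0:ℂ)) h t ht
      rw [deriv_const] at this
      exact this
    intro t ht
    exact ⟨key 0 0 (fun s hs => (ih s hs).1) t ht, key 0 1 (fun s hs => (ih s hs).2.1) t ht,
      key 1 0 (fun s hs => (ih s hs).2.2.1) t ht, key 1 1 (fun s hs => (ih s hs).2.2.2) t ht⟩

theorem step1 (H : Setup T c₀ c₁ A r c b g u) (l : ℕ) :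
    Bd2 T A (fun i => D 2 l (u i)) ∧ Bd2 T A (fun i => D 0 (l+1) (u i)) := by
  have hP : Good T (Bd2 T A) := good_Bd2
  induction l using Nat.strong_induction_on with
  | _ l ih =>
    set G : Idx → ℝ → ℝ → ℂ := fun i => D 0 l (g i) -
      (D 0 l (ml (b i) (D 2 0 (u i))) - ml (b i) (D 0 l (D 2 0 (u i)))) with hGdef
    have hsG : ∀ i, Sm (G i) := fun i => ((H.hgs i).D _ _).sub
      (((H.sb i).D _ _).sub ((H.hb.1 i).ml (((H.hu i).D _ _).D _ _)))
    have hG : Bd2 T A G := by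
      refine hP.sub _ _ (fun i => (H.hgs i).D _ _)
        (fun i => ((H.sb i).D _ _).sub ((H.hb.1 i).ml (((H.hu i).D _ _).D _ _))) ?_ ?_
      · exact (H.hg 0 l).toBd2 (fun i => (H.hgs i).D _ _)
      · refine comm hP l 0 b (fun i => D 2 0 (u i)) H.hb (fun i => (H.hu i).D _ _) ?_
        intro p q hp hq hpq
        obtain rfl : p = 0 := by omega
        simp only [H.D_uxx]
        exact (ih q (by omega)).1
    obtain ⟨s, s1, s2, s3⟩ := hG
    obtain ⟨q0, q01, q02, q03⟩ := H.init (l+1) 0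
    obtain ⟨q1, q11, q12, q13⟩ := H.init l 2
    set N := ⌈(1 + 1 / c₀) * T⌉₊ with hN
    set S : Idx → ℝ := fun i => ((q0 i ^ 2 + c₁ * q1 i ^ 2) + s i * T) *
      (Real.exp T * r i ^ N) with hS
    have hSs : Slow S := (((q01.pow 2).add ((Slow.const c₁).mul (q11.pow 2))).add
      (s1.mul (Slow.const T))).mul ((Slow.const _).mul (H.hr.pow N))
    have main : ∀ᶠ i in LF, ∀ t ∈ Set.Icc (0:ℝ) T,
        ∫ x in (0:ℝ)..1, (‖D 0 (l+1) (u i) x t‖ ^ 2 + c i x t * ‖D 2 l (u i) x t‖ ^ 2)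
          ≤ S i * A i ^ 2 := by
      filter_upwards [s3, q03, q13, H.hblog] with i hi h0 h1 hbl t ht
      have hlog : 0 ≤ Real.log (r i) := Real.log_nonneg (H.hr1 i)
      have hen := energy (T := T) (c₀ := c₀) (B := Real.log (r i)) (K := s i * A i ^ 2) H.hc₀
        hlog (mul_nonneg (s2 i) (sq_nonneg _))
        (H.hc.1 i) (H.hct i) (H.hcl i) hbl (v := D 0 l (u i)) (G := G i) ((H.hu i).D _ _) (hsG i)
        ?_ ?_ hi t ht
      · rw [dt_D (H.hu i), dx_D, dx_D] at hen
        refine hen.trans ?_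
        have e0 : ∫ x in (0:ℝ)..1, (‖D 0 (l+1) (u i) x 0‖ ^ 2 + c i x 0 * ‖D 2 l (u i) x 0‖ ^ 2)
            ≤ (q0 i ^ 2 + c₁ * q1 i ^ 2) * A i ^ 2 := by
          have c1 := ((H.hu i).D 0 (l+1)).contx 0
          have c2 := ((H.hu i).D 2 l).contx 0
          have c3 := (H.hc.1 i).contx 0
          have := intervalIntegral.integral_mono_on (μ := volume) (a := (0:ℝ)) (b := 1)
            (f := fun x => ‖D 0 (l+1) (u i) x 0‖ ^ 2 + c i x 0 * ‖D 2 l (u i) x 0‖ ^ 2)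
            (g := fun _ => (q0 i * A i) ^ 2 + c₁ * (q1 i * A i) ^ 2) zero_le_one
            (Continuous.intervalIntegrable (by fun_prop) _ _) intervalIntegrable_const
            (fun x hx => by
              have a1 := H.hcl i x hx 0 H.T0
              have a2 := H.hcu i x hx 0 H.T0
              have a3 := H.hc₀
              exact add_le_add (pow_le_pow_left₀ (norm_nonneg _) (h0 x hx 0 rfl) 2)
                (mul_le_mul a2 (pow_le_pow_left₀ (norm_nonneg _) (h1 x hx 0 rfl) 2)
                  (by positivity) (by linarith)))
          refine this.trans (le_of_eq ?_)
          simp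
          ring
        have e1 : Real.exp ((1 + Real.log (r i) + Real.log (r i) / c₀) * T)
            ≤ Real.exp T * r i ^ N := by
          have hrp : 0 < r i := by linarith [H.hr1 i]
          have : r i ^ N = Real.exp (Real.log (r i) * N) := by
            rw [mul_comm, Real.exp_nat_mul, Real.exp_log hrp]
          rw [this, ← Real.exp_add]
          refine Real.exp_le_exp.2 ?_
          have h5 : (1 + 1 / c₀) * T ≤ N := Nat.le_ceil _
          have h6 := mul_le_mul_of_nonneg_left h5 hlog
          have h7 : (1 + Real.log (r i) + Real.log (r i) / c₀) * T
            = T + Real.log (r i) * ((1 + 1 / c₀) * T) := by ring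
          linarith
        have hc1 : 0 ≤ c₁ := by
          have a1 := H.hcl i 0 ⟨le_rfl, zero_le_one⟩ 0 H.T0
          have a2 := H.hcu i 0 ⟨le_rfl, zero_le_one⟩ 0 H.T0
          linarith [H.hc₀]
        have hT := H.hT
        have hsi := s2 i
        calc _ ≤ ((q0 i ^ 2 + c₁ * q1 i ^ 2) * A i ^ 2 + s i * A i ^ 2 * T) *
              (Real.exp T * r i ^ N) := by
              refine mul_le_mul (by linarith) e1 (Real.exp_pos _).le (by positivity)
          _ = _ := by simp only [hS]; ring
      · intro x hx t' ht'
        have hp := congrFun (congrFun (H.pdeD i 0 l) x) t'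
        have e3 : D (0+2) l (ml (c i) (D 2 0 (u i))) = dx (dx (ml (c i) (D 2 l (u i)))) := by
          rw [← dx_D, ← dx_D, H.dtc i ((H.hu i).D _ _), H.D_uxx]
        rw [dt_D (H.hu i), dt_D (H.hu i), dx_D, dx_D, hGdef]
        rw [e3] at hp
        simp only [Pi.sub_apply, Pi.add_apply, H.D_uxx] at hp ⊢
        rw [← hp]
        simp only [ml]
        abel
      · intro t' ht'
        rw [dt_D (H.hu i), dx_D]
        exact H.bcD i (l+1) t' ht'
    have hcont : ∀ i t, Continuous fun x => ‖D 0 (l+1) (u i) x t‖ ^ 2 := fun i t =>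
      (((H.hu i).D 0 (l+1)).contx t).norm.pow 2
    have hcont' : ∀ i t, Continuous fun x => ‖D 2 l (u i) x t‖ ^ 2 := fun i t =>
      (((H.hu i).D 2 l).contx t).norm.pow 2
    have hcc : ∀ i t, Continuous fun x => c i x t := fun i t => (H.hc.1 i).contx t
    constructor
    · refine Bd2.of (hSs.mul (Slow.const c₀⁻¹)) ?_
      filter_upwards [main] with i hi t ht
      have h1 := hcont i t
      have h2 := hcont' i t
      have h3 := hcc i t
      have : ∫ x in (0:ℝ)..1, c₀ * ‖D 2 l (u i) x t‖ ^ 2 ≤ S i * A i ^ 2 := by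
        refine le_trans ?_ (hi t ht)
        refine intervalIntegral.integral_mono_on zero_le_one
          (Continuous.intervalIntegrable (by fun_prop) _ _)
          (Continuous.intervalIntegrable (by fun_prop) _ _) fun x hx => ?_
        have a1 := mul_le_mul_of_nonneg_right (H.hcl i x hx t ht) (sq_nonneg ‖D 2 l (u i) x t‖)
        linarith [sq_nonneg ‖D 0 (l+1) (u i) x t‖]
      rw [intervalIntegral.integral_const_mul, ← le_div_iff₀' H.hc₀] at this
      refine this.trans (le_of_eq ?_)
      rw [div_eq_mul_inv]; ring
    · refine Bd2.of hSs ?_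
      filter_upwards [main] with i hi t ht
      have h1 := hcont i t
      have h2 := hcont' i t
      have h3 := hcc i t
      refine le_trans ?_ (hi t ht)
      refine intervalIntegral.integral_mono_on zero_le_one
          (Continuous.intervalIntegrable (by fun_prop) _ _)
          (Continuous.intervalIntegrable (by fun_prop) _ _) fun x hx => ?_
      have a1 := mul_nonneg (H.hc₀.le.trans (H.hcl i x hx t ht)) (sq_nonneg ‖D 2 l (u i) x t‖)
      linarith

theorem divc (H : Setup T c₀ c₁ A r c b g u) {a : Idx → ℝ → ℝ → ℂ}
    (h : Bd (Set.Icc 0 T) A (fun i => ml (c i) (a i))) : Bd (Set.Icc 0 T) A a := by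
  obtain ⟨s, s1, s2, s3⟩ := h
  refine Bd.of H.hA (s1.mul (Slow.const c₀⁻¹)) ?_
  filter_upwards [s3] with i hi x hx t ht
  have h1 := hi x hx t ht
  have h2 := H.hcl i x hx t ht
  have h3 := H.hc₀
  simp only [ml, norm_smul, Real.norm_eq_abs, abs_of_pos (h3.trans_le h2)] at h1
  have h4 : c₀ * ‖a i x t‖ ≤ s i * A i :=
    (mul_le_mul_of_nonneg_right h2 (norm_nonneg _)).trans h1
  rw [← le_div_iff₀' h3] at h4
  refine h4.trans (le_of_eq ?_)
  rw [div_eq_mul_inv]; ring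

theorem step2 (H : Setup T c₀ c₁ A r c b g u) (l : ℕ) :
    Bd (Set.Icc 0 T) A (fun i => D 1 l (u i)) ∧ Bd (Set.Icc 0 T) A (fun i => D 0 l (u i)) := by
  have h1 : Bd (Set.Icc 0 T) A (fun i => D 1 l (u i)) := by
    refine Bd2.toBd_zero H.hA (fun i => (H.hu i).D _ _) (fun i t ht => (H.bcD i l t ht).2.2.1) ?_
    simpa only [dx_D] using (H.step1 l).1
  refine ⟨h1, ?_⟩
  refine Bd2.toBd_zero H.hA (fun i => (H.hu i).D _ _) (fun i t ht => (H.bcD i l t ht).1) ?_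
  simpa only [dx_D] using h1.toBd2 (fun i => (H.hu i).D _ _)

theorem step3 (H : Setup T c₀ c₁ A r c b g u) (l : ℕ) :
    Bd (Set.Icc 0 T) A (fun i => D 2 l (u i)) ∧ Bd (Set.Icc 0 T) A (fun i => D 3 l (u i)) := by
  have hP2 : Good T (Bd2 T A) := good_Bd2
  have hP : Good T (Bd (Set.Icc 0 T) A) := good_Bd subset_rfl H.hA
  have hs2 : ∀ i, Sm (D 2 l (u i)) := fun i => (H.hu i).D _ _
  have hsw : ∀ i, Sm (ml (c i) (D 2 l (u i))) := fun i => (H.hc.1 i).ml (hs2 i)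
  have w0 : Bd2 T A (fun i => ml (c i) (D 2 l (u i))) :=
    hP2.mul c _ H.hc hs2 (H.step1 l).1
  have w2 : Bd2 T A (fun i => dx (dx (ml (c i) (D 2 l (u i))))) := by
    have e : (fun i => dx (dx (ml (c i) (D 2 l (u i))))) = fun i =>
        (D 0 l (g i) - D 0 (l+2) (u i)) - D 0 l (ml (b i) (D 2 0 (u i))) := by
      funext i
      have e3 : D (0+2) l (ml (c i) (D 2 0 (u i))) = dx (dx (ml (c i) (D 2 l (u i)))) := by
        rw [← dx_D, ← dx_D, H.dtc i ((H.hu i).D _ _), H.D_uxx]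
      rw [← e3, ← H.pdeD i 0 l]; abel
    rw [e]
    refine hP2.sub _ _ (fun i => ((H.hgs i).D _ _).sub ((H.hu i).D _ _)) (fun i => (H.sb i).D _ _)
      (hP2.sub _ _ (fun i => (H.hgs i).D _ _) (fun i => (H.hu i).D _ _)
        ((H.hg 0 l).toBd2 (fun i => (H.hgs i).D _ _)) (H.step1 (l+1)).2) ?_
    refine leib hP2 l 0 b (fun i => D 2 0 (u i)) H.hb (fun i => (H.hu i).D _ _) ?_
    intro p q hp hq
    obtain rfl : p = 0 := by omega
    simp only [H.D_uxx]
    exact (H.step1 q).1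
  have w1 := Bd.interp H.hA hsw w0 w2
  have w0' := Bd2.toBd H.hA hsw w0 (w1.toBd2 (fun i => (hsw i).dx))
  have h2 := H.divc w0'
  refine ⟨h2, H.divc ?_⟩
  have e : (fun i => ml (c i) (D 3 l (u i))) = fun i =>
      dx (ml (c i) (D 2 l (u i))) - ml (dx (c i)) (D 2 l (u i)) := by
    funext i
    rw [dx_ml (H.hc.1 i) (hs2 i), dx_D, add_sub_cancel_left]
  rw [e]
  exact hP.sub _ _ (fun i => (hsw i).dx) (fun i => (H.hc.1 i).dx.ml (hs2 i)) w1
    (hP.mul _ _ H.hc.dx hs2 h2)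

theorem final (H : Setup T c₀ c₁ A r c b g u) (k : ℕ) :
    ∀ l, Bd (Set.Icc 0 T) A (fun i => D k l (u i)) := by
  have hP : Good T (Bd (Set.Icc 0 T) A) := good_Bd subset_rfl H.hA
  induction k using Nat.strong_induction_on with
  | _ k ih =>
    match k, ih with
    | 0, _ => exact fun l => (H.step2 l).2
    | 1, _ => exact fun l => (H.step2 l).1
    | 2, _ => exact fun l => (H.step3 l).1
    | 3, _ => exact fun l => (H.step3 l).2
    | k+4, ih =>
      intro l
      induction l using Nat.strong_induction_on with
      | _ l ihl =>
        refine H.divc ?_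
        have e : (fun i => ml (c i) (D (k+4) l (u i))) = fun i =>
            ((D k l (g i) - D k (l+2) (u i)) - D k l (ml (b i) (D 2 0 (u i)))) -
            (D (k+2) l (ml (c i) (D 2 0 (u i))) - ml (c i) (D (k+2) l (D 2 0 (u i)))) := by
          funext i
          rw [← H.pdeD i k l, H.D_uxx]; abel
        rw [e]
        have hs2 : ∀ i, Sm (D 2 0 (u i)) := fun i => (H.hu i).D _ _
        refine hP.sub _ _ (fun i => (((H.hgs i).D _ _).sub ((H.hu i).D _ _)).sub ((H.sb i).D _ _))
          (fun i => ((H.sc i).D _ _).sub ((H.hc.1 i).ml ((hs2 i).D _ _)))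
          (hP.sub _ _ (fun i => ((H.hgs i).D _ _).sub ((H.hu i).D _ _)) (fun i => (H.sb i).D _ _)
            (hP.sub _ _ (fun i => (H.hgs i).D _ _) (fun i => (H.hu i).D _ _)
              (H.hg k l) (ih k (by omega) _)) ?_) ?_
        · refine leib hP l k b (fun i => D 2 0 (u i)) H.hb hs2 fun p q hp hq => ?_
          simp only [H.D_uxx]
          exact ih (p+2) (by omega) q
        · refine comm hP l (k+2) c (fun i => D 2 0 (u i)) H.hc hs2 fun p q hp hq hpq => ?_
          simp only [H.D_uxx]
          by_cases hpk : p < k + 2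
          · exact ih (p+2) (by omega) q
          · obtain rfl : p = k + 2 := by omega
            exact ihl q (by omega)

end Setup
end Beam
/-! ### Reduction of the statement to the abstract theorem -/

namespace Beam

theorem setint_eq {T : ℝ} (hT : 0 ≤ T) (F : ℝ → ℝ → ℝ) :
    (∫ t in Set.Ioc (0:ℝ) T, ∫ x in Set.Ioo (0:ℝ) 1, F x t)
      = ∫ t in (0:ℝ)..T, ∫ x in (0:ℝ)..1, F x t := by
  simp only [intervalIntegral.integral_of_le hT, intervalIntegral.integral_of_le zero_le_one,
    integral_Ioc_eq_integral_Ioo]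

theorem setint_eq1 (F : ℝ → ℝ) :
    (∫ x in Set.Ioo (0:ℝ) 1, F x) = ∫ x in (0:ℝ)..1, F x := by
  simp only [intervalIntegral.integral_of_le zero_le_one, integral_Ioc_eq_integral_Ioo]

theorem D_zero_fun {F : Type*} [NormedAddCommGroup F] [NormedSpace ℝ F] (k l : ℕ) :
    D k l (0 : ℝ → ℝ → F) = 0 := by
  have h : Sm (0 : ℝ → ℝ → F) := contDiff_const
  have := D_sub h h k l
  simpa using this

def Asz (M : ℕ) (i : Idx) : ℝ := Real.sqrt (1 / (i:ℝ) ^ M)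

theorem Asz_nonneg (M : ℕ) (i : Idx) : 0 ≤ Asz M i := Real.sqrt_nonneg _

theorem Asz_sq (M : ℕ) (i : Idx) : Asz M i ^ 2 = 1 / (i:ℝ) ^ M :=
  Real.sq_sqrt (by have := i.2.1; positivity)

theorem Asz_le (M : ℕ) (i : Idx) : Asz M i ≤ 1 / (i:ℝ) ^ M := by
  have h0 := i.2.1
  have h : 1 ≤ 1 / (i:ℝ) ^ M := by
    rw [le_div_iff₀ (by positivity), one_mul]
    exact pow_le_one₀ h0.le i.2.2
  unfold Asz
  rw [Real.sqrt_le_left (by positivity)]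
  nlinarith

/-- functions of `x` only with all derivatives controlled in `L²` -/
theorem Bd_of_L2x {T : ℝ} {M : ℕ} {f : Idx → ℝ → ℂ} (hf : ∀ i, ContDiff ℝ (⊤ : ℕ∞) (f i))
    (h : ∀ k, ∃ C : ℝ, ∀ᶠ i : Idx in LF,
      ∫ x in (0:ℝ)..1, ‖iteratedDeriv k (f i) x‖ ^ 2 ≤ C / (i:ℝ) ^ M) (k : ℕ) :
    Bd (Set.Icc 0 T) (Asz M) (fun i => D k 0 (fun x _ => f i x)) := by
  have hs : ∀ i, Sm (fun x (_:ℝ) => f i x) := fun i => (hf i).comp contDiff_fst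
  have h2 : ∀ k, Bd2 T (Asz M) (fun i => D k 0 (fun x _ => f i x)) := by
    intro k
    obtain ⟨C, hC⟩ := h k
    refine Bd2.of (Slow.const C) ?_
    filter_upwards [hC] with i hi t ht
    simp only [D_x]
    rw [Asz_sq, mul_one_div]
    exact hi
  refine Bd2.toBd (Asz_nonneg M) (fun i => (hs i).D _ _) (h2 k) ?_
  simpa only [dx_D] using h2 (k+1)

theorem Bd_of_L2 {T : ℝ} (hT : 0 < T) {M : ℕ} {g : Idx → ℝ → ℝ → ℂ} (hg : ∀ i, Sm (g i))
    (h : ∀ l k, ∃ C : ℝ, ∀ᶠ i : Idx in LF,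
      ∫ t in (0:ℝ)..T, ∫ x in (0:ℝ)..1, ‖D k l (g i) x t‖ ^ 2 ≤ C / (i:ℝ) ^ M) (k l : ℕ) :
    Bd (Set.Icc 0 T) (Asz M) (fun i => D k l (g i)) := by
  have h2 : ∀ k, Bd2 T (Asz M) (fun i => D k l (g i)) := by
    intro k
    obtain ⟨C, hC⟩ := h l k
    obtain ⟨C', hC'⟩ := h (l+1) k
    refine Bd2.of (Slow.const (((1 + T) * C + T * C') / T)) ?_
    filter_upwards [hC, hC'] with i hi hi' t ht
    have := sob_t ((hg i).D k l) ht
    rw [dt_D (hg i)] at this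
    rw [Asz_sq, div_mul_eq_mul_div, le_div_iff₀' hT]
    refine this.trans ?_
    have e : ((1 + T) * C + T * C') * (1 / (i:ℝ) ^ M)
      = (1 + T) * (C / (i:ℝ) ^ M) + T * (C' / (i:ℝ) ^ M) := by ring
    rw [e]
    gcongr
  refine Bd2.toBd (Asz_nonneg M) (fun i => (hg i).D _ _) (h2 k) ?_
  simpa only [dx_D] using h2 (k+1)

theorem init_congr {T : ℝ} (hT : 0 < T) {M : ℕ} {f : Idx → ℝ → ℂ}
    (hf : ∀ i, ContDiff ℝ (⊤ : ℕ∞) (f i))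
    (h : ∀ k, ∃ C : ℝ, ∀ᶠ i : Idx in LF,
      ∫ x in (0:ℝ)..1, ‖iteratedDeriv k (f i) x‖ ^ 2 ≤ C / (i:ℝ) ^ M)
    {w : Idx → ℝ → ℝ → ℂ} (hw : ∀ i, Sm (w i))
    (hwf : ∀ i, ∀ x ∈ Set.Icc (0:ℝ) 1, w i x 0 = f i x) (k : ℕ) :
    Bd {0} (Asz M) (fun i => D k 0 (w i)) := by
  obtain ⟨s, s1, s2, s3⟩ := Bd_of_L2x (T := T) hf h k
  refine ⟨s, s1, s2, ?_⟩
  filter_upwards [s3] with i hi x hx t ht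
  rw [Set.mem_singleton_iff.1 ht]
  have h0 : (0:ℝ) ∈ Set.Icc (0:ℝ) T := ⟨le_rfl, hT.le⟩
  have hs1 : Sm (fun x (_:ℝ) => f i x) := (hf i).comp contDiff_fst
  have hs2 : Sm (fun x (_:ℝ) => w i x 0) :=
    (hw i).comp (contDiff_fst.prodMk contDiff_const)
  have e := D_congr hT hs2 hs1 (fun x hx _ _ => hwf i x hx) k 0 x hx 0 h0
  have e2 : D k 0 (w i) x 0 = D k 0 (fun x (_:ℝ) => w i x 0) x 0 := by
    rw [D_x, ← PD_eq]; simp [PD]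
  rw [e2, e]
  exact hi x hx 0 h0

theorem conclude {T : ℝ} (hT : 0 < T) {M : ℕ} {u : Idx → ℝ → ℝ → ℂ} (hu : ∀ i, Sm (u i))
    (h : Bd (Set.Icc 0 T) (Asz M) u) : ∃ C : ℝ, 0 < C ∧ ∀ᶠ i : Idx in LF,
      Real.sqrt (∫ t in (0:ℝ)..T, ∫ x in (0:ℝ)..1, ‖u i x t‖ ^ 2) ≤ C / (i:ℝ) ^ (M + 1) := by
  obtain ⟨s, s1, s2, s3⟩ := h
  obtain ⟨C, hC⟩ := s1 1
  refine ⟨Real.sqrt T * |C| + 1, by positivity, ?_⟩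
  filter_upwards [s3, hC] with i hi hCi
  have hpos := i.2.1
  set B := s i * Asz M i with hB
  have hB0 : 0 ≤ B := mul_nonneg (s2 i) (Asz_nonneg M i)
  have hI : ∫ t in (0:ℝ)..T, ∫ x in (0:ℝ)..1, ‖u i x t‖ ^ 2 ≤ T * B ^ 2 := by
    have h1 : ∀ t ∈ Set.Icc (0:ℝ) T, ∫ x in (0:ℝ)..1, ‖u i x t‖ ^ 2 ≤ B ^ 2 := by
      intro t ht
      have := intervalIntegral.integral_mono_on (μ := volume) (a := (0:ℝ)) (b := 1)
        (f := fun x => ‖u i x t‖ ^ 2) (g := fun _ => B ^ 2) zero_le_one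
        ((((hu i).contx t).norm.pow 2).intervalIntegrable _ _) intervalIntegrable_const
        (fun x hx => pow_le_pow_left₀ (norm_nonneg _) (hi x hx t ht) 2)
      simpa using this
    have := intervalIntegral.integral_mono_on (μ := volume) (a := (0:ℝ)) (b := T)
      (f := fun t => ∫ x in (0:ℝ)..1, ‖u i x t‖ ^ 2) (g := fun _ => B ^ 2) hT.le
      ((cont_int (sm_normsq (hu i))).intervalIntegrable _ _) intervalIntegrable_const h1
    simpa using this
  refine (Real.sqrt_le_sqrt hI).trans ?_
  rw [Real.sqrt_mul hT.le, Real.sqrt_sq hB0]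
  have h2 : s i ≤ |C| * (i:ℝ)⁻¹ := by
    rw [pow_one, abs_of_nonneg (s2 i)] at hCi
    exact hCi.trans (mul_le_mul_of_nonneg_right (le_abs_self _) (by positivity))
  have h3 : B ≤ |C| * (i:ℝ)⁻¹ * (1 / (i:ℝ) ^ M) :=
    mul_le_mul h2 (Asz_le M i) (Asz_nonneg M i) (by positivity)
  calc Real.sqrt T * B ≤ Real.sqrt T * (|C| * (i:ℝ)⁻¹ * (1 / (i:ℝ) ^ M)) := by gcongr
    _ = Real.sqrt T * |C| / (i:ℝ) ^ (M + 1) := by rw [pow_succ]; field_simp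
    _ ≤ _ := by gcongr; linarith

end Beam

/- STATEMENT 12: generalized regularity.  If the smooth coefficients are of slow
   scale in all derivatives, `b_ε` is of slow scale `L^∞`-log-type
   (`‖b_ε‖_{L^∞} ≤ log r_ε` with `(r_ε)` slow scale, `r_ε ≥ 1`), and the smooth data
   satisfy the `G^∞`-type estimate with a uniform exponent `M₀` (all squared `L²`
   norms of all derivatives are `O(ε^{-M₀})`), then the smooth solutions `u_ε`
   satisfy the uniform moderateness estimate
   `‖∂ₜˡ∂ₓᵏu_ε‖_{L²(X_T)} = O(ε^{-M₀-1})` for all `l,k`. -/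

theorem beam_generalized_regularity (T c₀ c₁ : ℝ) (M₀ : ℕ)
    (hT : 0 < T) (hc₀ : 0 < c₀) (hcc : c₀ < c₁)
    (c : ℝ → ℝ → ℝ) (b : ℝ → ℝ → ℝ → ℝ) (f₁ f₂ : ℝ → ℝ → ℂ) (g : ℝ → ℝ → ℝ → ℂ)
    (r : ℝ → ℝ)
    -- the coefficient `c_ε`: smooth, bounded between `c₀` and `c₁`, slow scale in all derivatives
    (hc : ∀ ε ∈ Set.Ioc (0:ℝ) 1, ContDiff ℝ (⊤ : ℕ∞) (c ε) ∧
      ∀ x ∈ Set.Icc (0:ℝ) 1, c₀ ≤ c ε x ∧ c ε x ≤ c₁)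
    (hcss : ∀ k : ℕ, ∃ s : ℝ → ℝ, SlowScaleNet s ∧ ∀ ε ∈ Set.Ioc (0:ℝ) 1,
      ∀ x ∈ Set.Icc (0:ℝ) 1, |iteratedDeriv k (c ε) x| ≤ s ε)
    -- the coefficient `b_ε`: smooth, of slow scale `L^∞`-log-type, slow scale in all derivatives
    (hb : ∀ ε ∈ Set.Ioc (0:ℝ) 1, ContDiff ℝ (⊤ : ℕ∞) (Function.uncurry (b ε)))
    (hr : SlowScaleNet r) (hr1 : ∀ ε ∈ Set.Ioc (0:ℝ) 1, 1 ≤ r ε)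
    (hblog : ∃ ε₀ ∈ Set.Ioc (0:ℝ) 1, ∀ ε ∈ Set.Ioc (0:ℝ) ε₀,
      ∀ x ∈ Set.Icc (0:ℝ) 1, ∀ t ∈ Set.Icc (0:ℝ) T, |b ε x t| ≤ Real.log (r ε))
    (hbss : ∀ l k : ℕ, ∃ s : ℝ → ℝ, SlowScaleNet s ∧ ∀ ε ∈ Set.Ioc (0:ℝ) 1,
      ∀ x ∈ Set.Icc (0:ℝ) 1, ∀ t ∈ Set.Icc (0:ℝ) T, |PD k l (b ε) x t| ≤ s ε)
    -- the data `f₁ε, f₂ε ∈ C_c^∞((0,1))`, `g_ε` smooth, with uniform moderateness exponent `M₀`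
    (hf : ∀ ε ∈ Set.Ioc (0:ℝ) 1, IsTestFun (f₁ ε) ∧ IsTestFun (f₂ ε))
    (hgsm : ∀ ε ∈ Set.Ioc (0:ℝ) 1, ContDiff ℝ (⊤ : ℕ∞) (Function.uncurry (g ε)))
    (hdata : ∀ l k : ℕ, ∃ C : ℝ, 0 < C ∧ ∃ ε₀ ∈ Set.Ioc (0:ℝ) 1,
      ∀ ε ∈ Set.Ioc (0:ℝ) ε₀,
        (∫ x in Set.Ioo (0:ℝ) 1, ‖iteratedDeriv k (f₁ ε) x‖ ^ 2)
          + (∫ x in Set.Ioo (0:ℝ) 1, ‖iteratedDeriv k (f₂ ε) x‖ ^ 2)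
          + (∫ t in Set.Ioc (0:ℝ) T, ∫ x in Set.Ioo (0:ℝ) 1, ‖PD k l (g ε) x t‖ ^ 2)
        ≤ C / ε ^ M₀)
    -- the smooth solutions
    (u : ℝ → ℝ → ℝ → ℂ)
    (hu : ∀ ε ∈ Set.Ioc (0:ℝ) 1, IsClassicalSol T (c ε) (b ε) (f₁ ε) (f₂ ε) (g ε) (u ε)) :
    ∀ l k : ℕ, ∃ C : ℝ, 0 < C ∧ ∃ ε₀ ∈ Set.Ioc (0:ℝ) 1,
      ∀ ε ∈ Set.Ioc (0:ℝ) ε₀,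
        Real.sqrt (∫ t in Set.Ioc (0:ℝ) T, ∫ x in Set.Ioo (0:ℝ) 1, ‖PD k l (u ε) x t‖ ^ 2)
          ≤ C / ε ^ (M₀ + 1) := by
  classical
  have ev : ∀ {P : ℝ → Prop}, (∃ ε₀ ∈ Set.Ioc (0:ℝ) 1, ∀ ε ∈ Set.Ioc (0:ℝ) ε₀, P ε) →
      ∀ᶠ i : Beam.Idx in Beam.LF, P i := by
    rintro P ⟨ε₀, h0, h⟩
    exact Beam.eventually_LF.2 ⟨ε₀, h0, fun i hi => h i ⟨i.2.1, hi⟩⟩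
  have hfd : ∀ k : ℕ, (∃ C : ℝ, ∀ᶠ i : Beam.Idx in Beam.LF,
      ∫ x in (0:ℝ)..1, ‖iteratedDeriv k (f₁ i) x‖ ^ 2 ≤ C / (i:ℝ) ^ M₀) ∧
      (∃ C : ℝ, ∀ᶠ i : Beam.Idx in Beam.LF,
      ∫ x in (0:ℝ)..1, ‖iteratedDeriv k (f₂ i) x‖ ^ 2 ≤ C / (i:ℝ) ^ M₀) ∧
      ∀ l, ∃ C : ℝ, ∀ᶠ i : Beam.Idx in Beam.LF,
      ∫ t in (0:ℝ)..T, ∫ x in (0:ℝ)..1, ‖Beam.D k l (g i) x t‖ ^ 2 ≤ C / (i:ℝ) ^ M₀ := by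
    intro k
    have n1 : ∀ F : ℝ → ℂ, 0 ≤ ∫ x in Set.Ioo (0:ℝ) 1, ‖F x‖ ^ 2 := fun F =>
      integral_nonneg fun x => by positivity
    have n2 : ∀ F : ℝ → ℝ → ℂ, 0 ≤ ∫ t in Set.Ioc (0:ℝ) T, ∫ x in Set.Ioo (0:ℝ) 1, ‖F x t‖ ^ 2 :=
      fun F => integral_nonneg fun t => n1 _
    refine ⟨?_, ?_, fun l => ?_⟩
    · obtain ⟨C, -, h⟩ := hdata 0 k
      refine ⟨C, (ev h).mono fun i hi => ?_⟩
      rw [← Beam.setint_eq1]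
      linarith [n1 (fun x => iteratedDeriv k (f₂ i) x), n2 (PD k 0 (g i))]
    · obtain ⟨C, -, h⟩ := hdata 0 k
      refine ⟨C, (ev h).mono fun i hi => ?_⟩
      rw [← Beam.setint_eq1]
      linarith [n1 (fun x => iteratedDeriv k (f₁ i) x), n2 (PD k 0 (g i))]
    · obtain ⟨C, -, h⟩ := hdata l k
      refine ⟨C, (ev h).mono fun i hi => ?_⟩
      rw [← Beam.setint_eq hT.le (fun x t => ‖Beam.D k l (g i) x t‖ ^ 2), ← Beam.PD_eq]
      linarith [n1 (fun x => iteratedDeriv k (f₁ i) x), n1 (fun x => iteratedDeriv k (f₂ i) x)]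
  have hus : ∀ i : Beam.Idx, Beam.Sm (u i) := fun i => (hu i i.2).1
  have hcs : ∀ i : Beam.Idx, Beam.Sm (fun x (_:ℝ) => c i x) := fun i =>
    (hc i i.2).1.comp contDiff_fst
  have hct : ∀ i : Beam.Idx, Beam.dt (fun x (_:ℝ) => c i x) = 0 := fun i => by
    funext x t; simp [Beam.dt]
  have H : Beam.Setup T c₀ c₁ (Beam.Asz M₀) (fun i => r i) (fun i x _ => c i x) (fun i => b i)
      (fun i => Beam.D 0 2 (u i) + Beam.D 2 0 (Beam.ml (fun x _ => c i x) (Beam.D 2 0 (u i)))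
        + Beam.ml (b i) (Beam.D 2 0 (u i))) (fun i => u i) := by
    have hgs : ∀ i : Beam.Idx, Beam.Sm (Beam.D 0 2 (u i) +
        Beam.D 2 0 (Beam.ml (fun x _ => c i x) (Beam.D 2 0 (u i)))
        + Beam.ml (b i) (Beam.D 2 0 (u i))) := fun i =>
      (((hus i).D _ _).add (((hcs i).ml ((hus i).D _ _)).D _ _)).add
        (Beam.Sm.ml (hb i i.2) ((hus i).D _ _))
    refine ⟨hT, hc₀, Beam.Asz_nonneg M₀, ⟨hcs, ?_⟩, hct, fun i x hx t _ => ((hc i i.2).2 x hx).1,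
      fun i x hx t _ => ((hc i i.2).2 x hx).2, ⟨fun i => hb i i.2, ?_⟩, Beam.slow_of_net hr,
      fun i => hr1 i i.2, ev hblog, hgs, ?_, hus, fun i => rfl, ?_, ?_, fun i => (hu i i.2).2.2.2⟩
    · intro k l
      match l with
      | 0 =>
        obtain ⟨s, s1, s2⟩ := hcss k
        refine Beam.Bd.of (fun _ => zero_le_one) (Beam.slow_of_net s1)
          (Filter.Eventually.of_forall fun i x hx t _ => ?_)
        rw [Beam.D_x, mul_one]
        exact s2 i i.2 x hx
      | l+1 =>
        refine Beam.Bd.of (fun _ => zero_le_one) (Beam.Slow.const 0)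
          (Filter.Eventually.of_forall fun i x hx t _ => ?_)
        rw [← Beam.D_dt, hct i, Beam.D_zero_fun]
        simp
    · intro k l
      obtain ⟨s, s1, s2⟩ := hbss l k
      refine Beam.Bd.of (fun _ => zero_le_one) (Beam.slow_of_net s1)
          (Filter.Eventually.of_forall fun i x hx t ht => ?_)
      rw [← Beam.PD_eq, mul_one]
      exact s2 i i.2 x hx t ht
    · intro k l
      obtain ⟨s, s1, s2, s3⟩ := Beam.Bd_of_L2 hT (g := fun i => g i) (fun i => hgsm i i.2)
        (fun l k => (hfd k).2.2 l) k l
      refine ⟨s, s1, s2, s3.mono fun i hi x hx t ht => ?_⟩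
      have e := Beam.D_congr hT (hgs i) (hgsm i i.2) (fun x hx t ht => by
        rw [← (hu i i.2).2.1 x hx t ht]
        rfl) k l x hx t ht
      have h' : ‖Beam.D k l (g i) x t‖ ≤ s i * Beam.Asz M₀ i := hi x hx t ht
      rw [← e] at h'
      exact h'
    · exact Beam.init_congr hT (f := fun i => f₁ i) (fun i => (hf i i.2).1.1)
        (fun k => (hfd k).1) hus (fun i x hx => ((hu i i.2).2.2.1 x hx).1)
    · exact Beam.init_congr hT (f := fun i => f₂ i) (w := fun i => Beam.dt (u i))
        (fun i => (hf i i.2).2.1)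
        (fun k => (hfd k).2.1) (fun i => (hus i).dt) (fun i x hx => ((hu i i.2).2.2.1 x hx).2)
  intro l k
  obtain ⟨C, hC, h⟩ := Beam.conclude hT (fun i => (hus i).D k l) (H.final k l)
  obtain ⟨ε₀, h0, h⟩ := Beam.eventually_LF.1 h
  refine ⟨C, hC, ε₀, h0, fun ε hε => ?_⟩
  have := h ⟨ε, hε.1, hε.2.trans h0.2⟩ hε.2
  rw [Beam.setint_eq hT.le (fun x t => ‖PD k l (u ε) x t‖ ^ 2), Beam.PD_eq]
  exact this

end
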